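/- arXiv:2401.05927 — 8 statements merged into one kernel-verified Lean document; each statement's English description precedes it below -/
import Mathlib

section
/- Let F be a field and L a finite-dimensional toral Lie algebra over F. Then no adjoint endomorphism of L has a nonzero eigenvalue in F: for all x, y ∈ L and every scalar λ ∈ F with λ ≠ 0, the equation ⁅x, y⁆ = λ • y implies y = 0. -/
set_option autoImplicit false

/-- A Lie algebra `L` over a field `F` is *toral* if for every `x ∈ L` the adjoint
endomorphism `ad x : L → L`, `y ↦ ⁅x, y⁆`, is semisimple, i.e. every `ad x`-invariant
`F`-subspace of `L` has an `ad x`-invariant complement. -/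
def IsToral (F L : Type*) [Field F] [LieRing L] [LieAlgebra F L] : Prop :=
  ∀ x : L, ∀ p : Submodule F L, (∀ y ∈ p, ⁅x, y⁆ ∈ p) →
    ∃ q : Submodule F L, (∀ y ∈ q, ⁅x, y⁆ ∈ q) ∧ IsCompl p q

/-!
If `⁅x, y⁆ = r • y`, then `ad y` sends `x` to `-(r • y)` and hence `(ad y)² x = 0`. A semisimple
endomorphism has the same kernel as its square, so already `⁅y, x⁆ = 0`, that is, `r • y = 0`.
-/

theorem ker_pow_eq_ker_of_isFinitelySemisimple {R M : Type*} [CommRing R] [AddCommGroup M]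
    [Module R M] {f : Module.End R M} (hf : f.IsFinitelySemisimple) {n : ℕ} (hn : 0 < n) :
    LinearMap.ker (f ^ n) = LinearMap.ker f := by
  rw [← Module.End.genEigenspace_zero_nat, ← Module.End.eigenspace_zero]
  exact hf.genEigenspace_eq_eigenspace 0 (by exact_mod_cast hn)

theorem smul_eq_zero_of_lie_eq_smul_of_isFinitelySemisimple_ad {R L : Type*} [CommRing R]
    [LieRing L] [LieAlgebra R L] {x y : L} {r : R}
    (hy : (LieAlgebra.ad R L y).IsFinitelySemisimple) (hxy : ⁅x, y⁆ = r • y) : r • y = 0 := by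
  have hx_sq : x ∈ LinearMap.ker (LieAlgebra.ad R L y ^ 2) := by
    rw [LinearMap.mem_ker, pow_two, Module.End.mul_apply, LieAlgebra.ad_apply, LieAlgebra.ad_apply,
      ← lie_skew y x, hxy, lie_neg, lie_smul, lie_self, smul_zero, neg_zero]
  have hyx : ⁅y, x⁆ = 0 := by
    rwa [ker_pow_eq_ker_of_isFinitelySemisimple hy two_pos] at hx_sq
  rw [← hxy, ← lie_skew, hyx, neg_zero]

theorem IsToral.isSemisimple_ad {F L : Type*} [Field F] [LieRing L] [LieAlgebra F L]
    (hL : IsToral F L) (x : L) : (LieAlgebra.ad F L x).IsSemisimple :=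
  Module.End.isSemisimple_iff.mpr (hL x)

theorem stmt_0_general (F L : Type*) [Field F] [LieRing L] [LieAlgebra F L] (hL : IsToral F L)
    (x y : L) (lam : F) (hlam : lam ≠ 0) (hxy : ⁅x, y⁆ = lam • y) : y = 0 :=
  have ad_semisimple := (hL.isSemisimple_ad y).isFinitelySemisimple
  (smul_eq_zero_iff_right hlam).mp
    (smul_eq_zero_of_lie_eq_smul_of_isFinitelySemisimple_ad ad_semisimple hxy)

/-- In a finite-dimensional toral Lie algebra, no adjoint endomorphism has a nonzero
eigenvalue: `⁅x, y⁆ = λ • y` with `λ ≠ 0` forces `y = 0`. -/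
theorem stmt_0 (F L : Type*) [Field F] [LieRing L] [LieAlgebra F L]
    [FiniteDimensional F L] (hL : IsToral F L) :
    ∀ (x y : L) (lam : F), lam ≠ 0 → ⁅x, y⁆ = lam • y → y = 0 :=
  stmt_0_general F L hL
end

section
/- Let F be a field and L a finite-dimensional toral Lie algebra over F with L ≠ 0. Then there exists a Lie ideal I of L with I ≠ L such that the quotient Lie algebra L/I is toral and L/I is either simple or abelian. -/
set_option autoImplicit false

section Semisimple

open Module Polynomial

variable {R M N : Type*} [CommRing R] [AddCommGroup M] [Module R M] [AddCommGroup N] [Module R N]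

theorem isSemisimple_of_surjective_of_comp_eq {f : End R M} {g : End R N} {φ : M →ₗ[R] N}
    (hφ : Function.Surjective φ) (h : φ ∘ₗ f = g ∘ₗ φ) (hf : f.IsSemisimple) :
    g.IsSemisimple := by
  let ψ : AEval' f →ₗ[R[X]] AEval' g :=
    LinearMap.ofAEval f (AEval'.of g ∘ₗ φ) fun x ↦ by
      simpa [AEval'.X_smul_of] using LinearMap.congr_fun h x
  have hψ : Function.Surjective ψ :=
    (AEval'.of g).surjective.comp (hφ.comp (AEval'.of f).symm.surjective)
  have : IsSemisimpleModule R[X] (AEval' f) := hf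
  exact IsSemisimpleModule.of_surjective ψ hψ

end Semisimple

section Toral

variable {F L L' : Type*} [Field F] [LieRing L] [LieAlgebra F L] [LieRing L'] [LieAlgebra F L']

theorem isToral_iff_forall_isSemisimple_ad :
    IsToral F L ↔ ∀ x : L, (LieAlgebra.ad F L x).IsSemisimple := by
  simp only [Module.End.isSemisimple_iff]
  rfl

theorem IsToral.of_surjective (hL : IsToral F L) {f : L →ₗ⁅F⁆ L'}
    (hf : Function.Surjective f) : IsToral F L' := by
  rw [isToral_iff_forall_isSemisimple_ad] at hL ⊢
  intro y
  obtain ⟨x, rfl⟩ := hf y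
  have h : (f : L →ₗ[F] L') ∘ₗ LieAlgebra.ad F L x =
      LieAlgebra.ad F L' (f x) ∘ₗ (f : L →ₗ[F] L') :=
    LinearMap.ext (f.map_lie x)
  exact isSemisimple_of_surjective_of_comp_eq hf h (hL x)

end Toral

section Simple

variable {R L L' : Type*} [CommRing R] [LieRing L] [LieAlgebra R L] [LieRing L'] [LieAlgebra R L']
  {f : L →ₗ⁅R⁆ L'}

theorem eq_bot_or_eq_top_of_isCoatom_ker (hf : Function.Surjective f) (hker : IsCoatom f.ker)
    (J : LieIdeal R L') : J = ⊥ ∨ J = ⊤ := by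
  have map_comap : (J.comap f).map f = J := by
    rw [LieIdeal.map_comap_eq (f.isIdealMorphism_of_surjective hf),
      f.idealRange_eq_top_of_surjective hf, top_inf_eq]
  rcases hker.le_iff.mp (f.ker_le_comap J) with comap_eq_top | comap_eq_ker
  · right
    rw [← map_comap, comap_eq_top, ← f.idealRange_eq_map, f.idealRange_eq_top_of_surjective hf]
  · left
    rw [← map_comap, comap_eq_ker, LieIdeal.map_eq_bot_iff]

theorem isSimple_or_isLieAbelian_of_isCoatom_ker (hf : Function.Surjective f)
    (hker : IsCoatom f.ker) : LieAlgebra.IsSimple R L' ∨ IsLieAbelian L' :=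
  or_iff_not_imp_right.mpr fun non_abelian ↦
    ⟨eq_bot_or_eq_top_of_isCoatom_ker hf hker, non_abelian⟩

end Simple

section Quotient

variable {R L : Type*} [CommRing R] [LieRing L] [LieAlgebra R L] (I : LieIdeal R L)

/-- The canonical projection `L → L ⧸ I` as a morphism of Lie algebras; `LieSubmodule.Quotient.mk'`
is only a morphism of `L`-modules. -/
def lieQuotientMk : L →ₗ⁅R⁆ L ⧸ I where
  __ := (LieSubmodule.Quotient.mk' I : L →ₗ[R] L ⧸ I)
  map_lie' := LieSubmodule.Quotient.mk_bracket I _ _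

theorem lieQuotientMk_surjective : Function.Surjective (lieQuotientMk I) :=
  LieSubmodule.Quotient.surjective_mk' I

theorem ker_lieQuotientMk : (lieQuotientMk I).ker = I :=
  LieSubmodule.ext _ _ fun _ ↦ LieSubmodule.Quotient.mk_eq_zero I

end Quotient

theorem stmt_2_general (F L : Type*) [Field F] [LieRing L] [LieAlgebra F L]
    [IsCoatomic (LieIdeal F L)] [Nontrivial L] (hL : IsToral F L) :
    ∃ I : LieIdeal F L, I ≠ ⊤ ∧ IsToral F (L ⧸ I) ∧
      (LieAlgebra.IsSimple F (L ⧸ I) ∨ IsLieAbelian (L ⧸ I)) := by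
  obtain ⟨I, hI⟩ := IsCoatomic.exists_coatom (LieIdeal F L)
  have mk_surjective := lieQuotientMk_surjective I
  have ker_isCoatom : IsCoatom (lieQuotientMk I).ker := by rwa [ker_lieQuotientMk]
  exact ⟨I, hI.ne_top, hL.of_surjective mk_surjective,
    isSimple_or_isLieAbelian_of_isCoatom_ker mk_surjective ker_isCoatom⟩

/-- Every nonzero finite-dimensional toral Lie algebra has a proper Lie ideal `I` such
that the quotient `L ⧸ I` is toral and either simple or abelian. -/
theorem stmt_2 (F L : Type*) [Field F] [LieRing L] [LieAlgebra F L]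
    [FiniteDimensional F L] [Nontrivial L] (hL : IsToral F L) :
    ∃ I : LieIdeal F L, I ≠ ⊤ ∧ IsToral F (L ⧸ I) ∧
      (LieAlgebra.IsSimple F (L ⧸ I) ∨ IsLieAbelian (L ⧸ I)) :=
  stmt_2_general F L hL
end

section
/- Let F be a field of characteristic 0 and L a finite-dimensional Lie algebra over F. If x, y ∈ L and λ ∈ F with λ ≠ 0 satisfy ⁅x, y⁆ = λ • y, then the adjoint endomorphism ad y : L → L is nilpotent. In particular, every inertial element of L is ad-nilpotent. -/
set_option autoImplicit false

/-- A nonzero element `y` of a Lie algebra `L` over `F` is *inertial* if there are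
`x ∈ L` and a nonzero scalar `c ∈ F` with `⁅x, y⁆ = c • y`. -/
def IsInertial (F : Type*) {L : Type*} [Field F] [LieRing L] [LieAlgebra F L] (y : L) :
    Prop :=
  y ≠ 0 ∧ ∃ (x : L) (c : F), c ≠ 0 ∧ ⁅x, y⁆ = c • y

/-!
Since `⁅x, ·⁆` is a derivation of an associative algebra, `⁅x, y⁆ = c • y` implies
`⁅x, y ^ n⁆ = (n * c) • y ^ n`. If no power of `y` vanishes, the powers are therefore eigenvectors
of `ad x` for the eigenvalues `n * c`, which are distinct in characteristic zero; so they are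
linearly independent, that is, `y` is transcendental. But an endomorphism of a finite-dimensional
space is algebraic.
-/

attribute [local instance] LieRing.ofAssociativeRing

theorem lie_mul {A : Type*} [NonUnitalRing A] (x a b : A) :
    ⁅x, a * b⁆ = ⁅x, a⁆ * b + a * ⁅x, b⁆ := by
  simp only [Ring.lie_def, sub_mul, mul_sub, mul_assoc]
  abel

section Associative

variable {R A : Type*} [CommRing R] [Ring A] [Algebra R A] {x y : A} {c : R}

theorem transcendental_of_linearIndependent_pow (h : LinearIndependent R fun n : ℕ ↦ y ^ n) :
    Transcendental R y := by
  rw [transcendental_iff]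
  intro p hp
  rw [Polynomial.aeval_eq_sum_range] at hp
  ext n
  by_cases hn : n ∈ Finset.range (p.natDegree + 1)
  · exact linearIndependent_iff'.mp h _ p.coeff hp n hn
  · exact Polynomial.coeff_eq_zero_of_natDegree_lt (by simpa using hn)

theorem lie_pow_of_lie_eq_smul (hxy : ⁅x, y⁆ = c • y) (n : ℕ) :
    ⁅x, y ^ n⁆ = (n * c) • y ^ n := by
  induction n with
  | zero => simp [Ring.lie_def]
  | succ n ih =>
    calc ⁅x, y ^ (n + 1)⁆ = ⁅x, y ^ n⁆ * y + y ^ n * ⁅x, y⁆ := by rw [pow_succ, lie_mul]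
      _ = (n * c) • y ^ (n + 1) + c • y ^ (n + 1) := by
        rw [ih, hxy, smul_mul_assoc, mul_smul_comm, ← pow_succ]
      _ = ((n + 1 : ℕ) * c) • y ^ (n + 1) := by rw [← add_smul, Nat.cast_succ, add_one_mul]

variable [IsDomain R] [CharZero R] [Module.IsTorsionFree R A]

theorem linearIndependent_pow_of_lie_eq_smul (hc : c ≠ 0) (hxy : ⁅x, y⁆ = c • y)
    (hy : ¬ IsNilpotent y) : LinearIndependent R fun n : ℕ ↦ y ^ n := by
  have eigenvalues_injective : Function.Injective fun n : ℕ ↦ (n : R) * c :=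
    (mul_left_injective₀ hc).comp Nat.cast_injective
  refine Module.End.eigenvectors_linearIndependent' (LieAlgebra.ad R A x) _
    eigenvalues_injective _ fun n ↦ ⟨?_, fun hn ↦ hy ⟨n, hn⟩⟩
  exact Module.End.mem_eigenspace_iff.mpr (lie_pow_of_lie_eq_smul hxy n)

theorem isNilpotent_of_lie_eq_smul (hy : IsAlgebraic R y) (hc : c ≠ 0)
    (hxy : ⁅x, y⁆ = c • y) : IsNilpotent y := by
  by_contra hnil
  exact transcendental_of_linearIndependent_pow
    (linearIndependent_pow_of_lie_eq_smul hc hxy hnil) hy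

end Associative

theorem stmt_7_general {R L M : Type*} [CommRing R] [IsDomain R] [CharZero R] [LieRing L]
    [LieAlgebra R L] [AddCommGroup M] [Module R M] [Module.IsTorsionFree R M] [LieRingModule L M]
    [LieModule R L M] {x y : L} {c : R} (hc : c ≠ 0) (hxy : ⁅x, y⁆ = c • y)
    (hy : IsAlgebraic R (LieModule.toEnd R L M y)) : IsNilpotent (LieModule.toEnd R L M y) := by
  have lie_toEnd : ⁅LieModule.toEnd R L M x, LieModule.toEnd R L M y⁆ =
      c • LieModule.toEnd R L M y := by
    rw [← LieHom.map_lie, hxy, map_smul]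
  exact isNilpotent_of_lie_eq_smul hy hc lie_toEnd

/-- Over a field of characteristic zero, if `⁅x, y⁆ = λ • y` with `λ ≠ 0` in a
finite-dimensional Lie algebra, then `ad y` is nilpotent; in particular every inertial
element is ad-nilpotent. -/
theorem stmt_7 (F L : Type*) [Field F] [CharZero F] [LieRing L] [LieAlgebra F L]
    [FiniteDimensional F L] :
    (∀ (x y : L) (lam : F), lam ≠ 0 → ⁅x, y⁆ = lam • y →
      IsNilpotent (LieAlgebra.ad F L y)) ∧
    (∀ y : L, IsInertial F y → IsNilpotent (LieAlgebra.ad F L y)) :=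
  have nilpotent (x y : L) (lam : F) (hlam : lam ≠ 0) (hxy : ⁅x, y⁆ = lam • y) :
      IsNilpotent (LieAlgebra.ad F L y) :=
    stmt_7_general hlam hxy (Algebra.IsAlgebraic.isAlgebraic _)
  ⟨nilpotent, fun y ⟨_, x, c, hc, hxy⟩ ↦ nilpotent x y c hc hxy⟩
end

section
/- Let F be a field of characteristic 0 and L a finite-dimensional Lie algebra over F that is spanned as an F-vector space by elements z for which ad z is nilpotent. Then the F-linear span I of the set of inertial elements of L is a Lie ideal of L; that is, ⁅z, w⁆ ∈ I for every z ∈ L and every w ∈ I. -/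
set_option autoImplicit false

/-!
If `D` is a nilpotent derivation, then each `exp (t • D)` is an automorphism, so it maps inertial
elements to inertial elements. For inertial `y` the polynomial curve `t ↦ exp (t • D) y` therefore
stays in the span of the inertial elements, and over an infinite field so do its coefficients, the
linear one being `D y`. Apply this to `D = ad z` and extend linearly in `z`.
-/

open Finset

section PolynomialCurve

variable {K V : Type*} [Field K] [AddCommGroup V] [Module K V] {W : Submodule K V}

theorem coeff_mem_of_forall_sum_pow_smul_mem [Infinite K] {s : Finset ℕ} {v : ℕ → V}
    (h : ∀ t : K, ∑ i ∈ s, t ^ i • v i ∈ W) {j : ℕ} (hj : j ∈ s) : v j ∈ W := by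
  refine (Subspace.forall_mem_dualAnnihilator_apply_eq_zero_iff W (v j)).1 fun φ hφ ↦ ?_
  let p : Polynomial K := ∑ i ∈ s, Polynomial.monomial i (φ (v i))
  have eval_p (t : K) : p.eval t = φ (∑ i ∈ s, t ^ i • v i) := by
    simp [p, Polynomial.eval_finsetSum, mul_comm]
  have p_eq_zero : p = 0 := Polynomial.zero_of_eval_zero p fun t ↦
    (eval_p t).trans ((Submodule.mem_dualAnnihilator φ).1 hφ _ (h t))
  calc φ (v j) = p.coeff j := by simp [p, Polynomial.coeff_monomial, hj]
    _ = 0 := by rw [p_eq_zero, Polynomial.coeff_zero]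

theorem apply_mem_of_forall_exp_smul_apply_mem [Infinite K] [Module ℚ V] {a : Module.End K V}
    (ha : IsNilpotent a) {v : V} (h : ∀ t : K, IsNilpotent.exp (t • a) v ∈ W) : a v ∈ W := by
  obtain ⟨n, hn⟩ := ha
  -- The exponent `n + 2` makes sure that the sum below has a linear term.
  have pow_eq_zero : a ^ (n + 2) = 0 := pow_eq_zero_of_le (Nat.le_add_right n 2) hn
  let coeff (i : ℕ) : V := (i.factorial : ℚ)⁻¹ • (a ^ i) v
  have exp_eq_sum (t : K) : IsNilpotent.exp (t • a) v = ∑ i ∈ range (n + 2), t ^ i • coeff i := by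
    rw [IsNilpotent.exp_eq_sum (by rw [smul_pow, pow_eq_zero, smul_zero])]
    simp [coeff, smul_pow, smul_comm _ (t ^ _)]
  have coeff_one_mem : coeff 1 ∈ W :=
    coeff_mem_of_forall_sum_pow_smul_mem (fun t ↦ exp_eq_sum t ▸ h t) (mem_range.2 (by lia))
  simpa [coeff] using coeff_one_mem

end PolynomialCurve

section Inertial

variable {F L : Type*} [Field F] [LieRing L] [LieAlgebra F L]

theorem IsInertial.map_of_injective {L' : Type*} [LieRing L'] [LieAlgebra F L'] {y : L}
    (hy : IsInertial F y) {f : L →ₗ⁅F⁆ L'} (hf : Function.Injective f) : IsInertial F (f y) := by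
  obtain ⟨y_ne_zero, x, c, c_ne_zero, lie_eq⟩ := hy
  exact ⟨(map_ne_zero_iff f hf).2 y_ne_zero, f x, c, c_ne_zero, by
    rw [← LieHom.map_lie, lie_eq, map_smul]⟩

theorem IsInertial.derivation_apply_mem_span [Infinite F] [LieAlgebra ℚ L] {y : L}
    (hy : IsInertial F y) {D : LieDerivation F L L} (hD : IsNilpotent D.toLinearMap) :
    D y ∈ Submodule.span F {y : L | IsInertial F y} := by
  refine apply_mem_of_forall_exp_smul_apply_mem hD fun t ↦ Submodule.subset_span ?_
  let expEquiv : L ≃ₗ⁅F⁆ L := LieDerivation.exp (t • D) (hD.smul t)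
  exact hy.map_of_injective (f := expEquiv.toLieHom) expEquiv.injective

theorem IsInertial.lie_mem_span [CharZero F] {y : L} (hy : IsInertial F y) {z : L}
    (hz : IsNilpotent (LieAlgebra.ad F L z)) :
    ⁅z, y⁆ ∈ Submodule.span F {y : L | IsInertial F y} := by
  let _ : Module ℚ L := Module.compHom L (algebraMap ℚ F)
  let _ : LieAlgebra ℚ L := { lie_smul := fun q x y ↦ lie_smul (q : F) x y }
  have ad_isNilpotent : IsNilpotent (LieDerivation.ad F L z).toLinearMap := by
    rwa [LieDerivation.coe_ad_apply_eq_ad_apply]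
  have ad_apply : LieDerivation.ad F L z y = ⁅z, y⁆ := lie_skew z y
  exact ad_apply ▸ hy.derivation_apply_mem_span ad_isNilpotent

end Inertial

theorem stmt_8_general {F L : Type*} [Field F] [CharZero F] [LieRing L] [LieAlgebra F L] {z w : L}
    (hz : z ∈ Submodule.span F {z : L | IsNilpotent (LieAlgebra.ad F L z)})
    (hw : w ∈ Submodule.span F {y : L | IsInertial F y}) :
    ⁅z, w⁆ ∈ Submodule.span F {y : L | IsInertial F y} := by
  have lie_mem := Submodule.apply_mem_map₂ (LieAlgebra.ad F L : L →ₗ[F] Module.End F L) hz hw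
  rw [Submodule.map₂_span_span] at lie_mem
  refine Submodule.span_le.2 ?_ lie_mem
  rintro _ ⟨z, hz, y, hy, rfl⟩
  exact IsInertial.lie_mem_span hy hz

/-- Over a field of characteristic zero, if a finite-dimensional Lie algebra `L` is
spanned by elements `z` with `ad z` nilpotent, then the span of the inertial elements of
`L` is a Lie ideal: it is stable under bracketing with arbitrary elements of `L`. -/
theorem stmt_8 (F L : Type*) [Field F] [CharZero F] [LieRing L] [LieAlgebra F L]
    [FiniteDimensional F L]
    (hspan : Submodule.span F {z : L | IsNilpotent (LieAlgebra.ad F L z)} = ⊤) :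
    ∀ z : L, ∀ w ∈ Submodule.span F {y : L | IsInertial F y},
      ⁅z, w⁆ ∈ Submodule.span F {y : L | IsInertial F y} :=
  fun _ _ hw ↦ stmt_8_general (hspan ▸ Submodule.mem_top) hw
end

section
/- Let F be a field of characteristic 0, n a positive integer, and L a Lie subalgebra of sl_n(F) (the Lie algebra of n×n matrices over F of trace zero, with the commutator bracket) that is simple as a Lie algebra. If there exists x ∈ L such that the adjoint endomorphism ad x : L → L has a nonzero eigenvalue in F, then L is inertially generated. -/
/-- A Lie algebra is *inertially generated* if it admits an `F`-basis all of whose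
elements are inertial. -/
def InertiallyGenerated (F L : Type*) [Field F] [LieRing L] [LieAlgebra F L] : Prop :=
  ∃ (n : ℕ) (b : Module.Basis (Fin n) F L), ∀ i, IsInertial F (b i)

attribute [local instance 100] LieRing.ofAssociativeRing

/-!
An eigenvector of `ad x` for a nonzero eigenvalue is ad-nilpotent. Conversely, if `L` is simple of
characteristic zero, every ad-nilpotent `e ≠ 0` is inertial: nondegeneracy of the Killing form gives
`z` such that `h = ⁅e, z⁆` satisfies `⁅h, e⁆ = 2 • e` (the first half of the Jacobson–Morozov
theorem). So it is enough to show that the span `S` of the ad-nilpotent elements is an ideal.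

The space `L` is the sum of the generalized eigenspaces of `ad h`, and generalized eigenvectors of
nonzero weight lie in `S`. For `w` of weight `μ` the bracket `⁅w, e⁆` has weight `μ + 2`, which
leaves the case `μ = -2`. There `exp (ad e) w` is ad-nilpotent, being the image of `w` under an
automorphism, and it differs from `⁅e, w⁆` by terms of weight different from `0`.
-/

open LieAlgebra

section AssociativeAlgebra

variable {R A : Type*} [CommRing R] [Ring A] [Algebra R A] {a b c : A} {t : R}

lemma mul_sub_smul_one_of_lie_eq_smul (hca : ⁅c, a⁆ = t • a) (s : R) :
    a * (c - s • 1) = (c - (s + t) • 1) * a := by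
  rw [LieRing.of_associative_ring_bracket, sub_eq_iff_eq_add] at hca
  rw [mul_sub, sub_mul, hca, mul_smul_comm, smul_mul_assoc, mul_one, one_mul]
  module

lemma pow_succ_mul_of_lie_eq (hab : ⁅a, b⁆ = c) (hca : ⁅c, a⁆ = (2 * t) • a) (i : ℕ) :
    a ^ (i + 1) * b = b * a ^ (i + 1) + (i + 1 : R) • ((c - (i * t : R) • 1) * a ^ i) := by
  induction i with
  | zero => simp [← hab, LieRing.of_associative_ring_bracket]
  | succ i ih =>
    have hba : a * b = b * a + c := by
      rw [← hab, LieRing.of_associative_ring_bracket, add_sub_cancel]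
    calc a ^ (i + 1 + 1) * b
        = a * b * a ^ (i + 1) + (i + 1 : R) • (a * (c - (i * t : R) • 1) * a ^ i) := by
          rw [pow_succ' a (i + 1), mul_assoc, ih, mul_add, mul_smul_comm, ← mul_assoc, ← mul_assoc]
      _ = b * a ^ (i + 1 + 1) +
            (c + (i + 1 : R) • (c - (i * t + 2 * t : R) • 1)) * a ^ (i + 1) := by
          rw [mul_sub_smul_one_of_lie_eq_smul hca, hba, add_mul, mul_assoc b, ← pow_succ',
            mul_assoc _ a, ← pow_succ', add_mul, smul_mul_assoc, add_assoc]
      _ = _ := by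
          rw [← smul_mul_assoc]
          congr 2
          push_cast
          module

end AssociativeAlgebra

section ShiftProducts

variable {K V : Type*} [Field K] [AddCommGroup V] [Module K V] {f : Module.End K V} {S : Set K}

/-- The monoid of all products of endomorphisms `f - s • 1` with `s ∈ S`. It contains `0` exactly
when `f` is a root of a nonzero polynomial that splits with all its roots in `S`. -/
def shiftProducts (f : Module.End K V) (S : Set K) : Submonoid (Module.End K V) :=
  Submonoid.closure ((fun s : K ↦ f - s • 1) '' S)

lemma sub_smul_one_mem_shiftProducts {s : K} (hs : s ∈ S) : f - s • 1 ∈ shiftProducts f S :=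
  Submonoid.subset_closure ⟨s, hs, rfl⟩

lemma isNilpotent_of_zero_mem_shiftProducts (h : 0 ∈ shiftProducts f {0}) : IsNilpotent f := by
  simpa [shiftProducts, Submonoid.mem_closure_singleton, IsNilpotent] using h

variable [FiniteDimensional K V]

lemma maxGenEigenspace_le_map_sub_smul_one (f : Module.End K V) {a μ : K} (h : μ ≠ a) :
    f.maxGenEigenspace μ ≤ (f.maxGenEigenspace μ).map (f - a • 1) := by
  have hmaps : Set.MapsTo (f - a • (1 : Module.End K V)) (f.maxGenEigenspace μ)
      (f.maxGenEigenspace μ) :=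
    Module.End.mapsTo_maxGenEigenspace_of_comm
      ((Commute.refl f).sub_right ((Commute.one_right f).smul_right a)) μ
  have hker : Disjoint (f.maxGenEigenspace μ) (LinearMap.ker (f - a • 1)) := by
    rw [← Module.End.eigenspace_def]
    exact f.disjoint_genEigenspace h ⊤ 1
  exact (LinearMap.injOn_iff_surjOn hmaps).1 (LinearMap.injOn_of_disjoint_ker le_rfl hker)

lemma mem_iSup_maxGenEigenspace_of_sub_smul_one_apply_mem {a : K} {v : V}
    (hv : (f - a • 1) v ∈ ⨆ μ, f.maxGenEigenspace μ) : v ∈ ⨆ μ, f.maxGenEigenspace μ := by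
  have hle (μ : K) : f.maxGenEigenspace μ ≤ ⨆ μ, f.maxGenEigenspace μ :=
    le_iSup (fun μ ↦ f.maxGenEigenspace μ) μ
  have hsup : ⨆ μ, f.maxGenEigenspace μ ≤
      (⨆ μ, f.maxGenEigenspace μ).map (f - a • 1) ⊔ f.maxGenEigenspace a := by
    refine iSup_le fun μ ↦ ?_
    by_cases hμ : μ = a
    · exact hμ ▸ le_sup_right
    · exact le_sup_of_le_left <|
        (maxGenEigenspace_le_map_sub_smul_one f hμ).trans (Submodule.map_mono (hle μ))
  obtain ⟨_, ⟨u, hu, rfl⟩, w, hw, hvw⟩ := Submodule.mem_sup.1 (hsup hv)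
  have hdiff : v - u ∈ f.maxGenEigenspace a := by
    rw [Module.End.mem_maxGenEigenspace] at hw ⊢
    obtain ⟨k, hk⟩ := hw
    exact ⟨k + 1, by rwa [pow_succ, Module.End.mul_apply, map_sub, ← hvw, add_sub_cancel_left]⟩
  simpa using add_mem hu (hle a hdiff)

lemma iSup_maxGenEigenspace_eq_top_of_zero_mem_shiftProducts (h : 0 ∈ shiftProducts f S) :
    ⨆ μ, f.maxGenEigenspace μ = ⊤ := by
  suffices ∀ P ∈ shiftProducts f S, ∀ v,
      P v ∈ ⨆ μ, f.maxGenEigenspace μ → v ∈ ⨆ μ, f.maxGenEigenspace μ from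
    eq_top_iff.2 fun v _ ↦ this 0 h v (zero_mem _)
  intro P hP
  induction hP using Submonoid.closure_induction with
  | mem _ h =>
    obtain ⟨a, -, rfl⟩ := h
    exact fun v ↦ mem_iSup_maxGenEigenspace_of_sub_smul_one_apply_mem
  | one => exact fun v hv ↦ hv
  | mul P Q _ _ ihP ihQ => exact fun v hv ↦ ihQ v (ihP _ hv)

end ShiftProducts

section NilpotentEndomorphism

variable {K V : Type*} [Field K] [AddCommGroup V] [Module K V] {A B C : Module.End K V} {t : K}

lemma exists_mul_eq_mul_of_mem_shiftProducts (hCA : ⁅C, A⁆ = (2 * t) • A) {P : Module.End K V}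
    (hP : P ∈ shiftProducts C (AddSubgroup.zmultiples t)) :
    ∃ Q ∈ shiftProducts C (AddSubgroup.zmultiples t), P * A = A * Q := by
  induction hP using Submonoid.closure_induction with
  | mem _ h =>
    obtain ⟨s, hs, rfl⟩ := h
    have h2t : 2 * t ∈ AddSubgroup.zmultiples t := ⟨2, by simp⟩
    refine ⟨_, sub_smul_one_mem_shiftProducts (sub_mem hs h2t), ?_⟩
    rw [mul_sub_smul_one_of_lie_eq_smul hCA, sub_add_cancel]
  | one => exact ⟨1, one_mem _, by rw [one_mul, mul_one]⟩
  | mul P P' _ _ ih ih' =>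
    obtain ⟨Q, hQ, hPQ⟩ := ih
    obtain ⟨Q', hQ', hPQ'⟩ := ih'
    exact ⟨Q * Q', mul_mem hQ hQ', by rw [mul_assoc, hPQ', ← mul_assoc, hPQ, mul_assoc]⟩

lemma apply_sub_smul_one_apply_eq_zero (hCA : ⁅C, A⁆ = (2 * t) • A) {u : V} (hu : A u = 0)
    (s : K) : A ((C - s • 1) u) = 0 := by
  rw [← Module.End.mul_apply, mul_sub_smul_one_of_lie_eq_smul hCA, Module.End.mul_apply, hu,
    map_zero]

lemma pow_apply_apply_of_lie_eq (hAB : ⁅A, B⁆ = C) (hCA : ⁅C, A⁆ = (2 * t) • A) {i : ℕ} {v : V}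
    (hv : A ((A ^ i) v) = 0) :
    (A ^ (i + 1)) (B v) = (i + 1 : K) • (C - (i * t : K) • 1) ((A ^ i) v) := by
  have hv' : (A ^ (i + 1)) v = 0 := by rwa [pow_succ', Module.End.mul_apply]
  have h := LinearMap.congr_fun (pow_succ_mul_of_lie_eq hAB hCA i) v
  rwa [LinearMap.add_apply, Module.End.mul_apply B, hv', map_zero, zero_add] at h

lemma exists_mem_shiftProducts_pow_apply_eq_zero [CharZero K] (hAB : ⁅A, B⁆ = C)
    (hCA : ⁅C, A⁆ = (2 * t) • A) (hA : IsNilpotent A) (j : ℕ) :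
    ∃ P ∈ shiftProducts C (AddSubgroup.zmultiples t),
      ∀ w, A ((A ^ j) w) = 0 → P ((A ^ j) w) = 0 := by
  obtain ⟨N, hN⟩ := hA
  obtain hj | ⟨d, rfl⟩ := (le_total N j).imp_right Nat.exists_eq_add_of_le
  · exact ⟨1, one_mem _, fun w _ ↦ by rw [pow_eq_zero_of_le hj hN, LinearMap.zero_apply, map_zero]⟩
  induction d generalizing j with
  | zero => exact ⟨1, one_mem _, fun w _ ↦ by rw [← add_zero j, hN, LinearMap.zero_apply, map_zero]⟩
  | succ d ih =>
    obtain ⟨P, hP, hPA⟩ := ih (j + 1) (by rwa [add_right_comm])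
    have hjt : j * t ∈ AddSubgroup.zmultiples t := ⟨j, by simp⟩
    refine ⟨P * (C - (j * t) • 1), mul_mem hP (sub_smul_one_mem_shiftProducts hjt), fun w hw ↦ ?_⟩
    have hlift : (C - (j * t) • 1) ((A ^ j) w) = (A ^ (j + 1)) ((j + 1 : K)⁻¹ • B w) := by
      rw [map_smul, pow_apply_apply_of_lie_eq hAB hCA hw,
        inv_smul_smul₀ (Nat.cast_add_one_ne_zero j)]
    rw [Module.End.mul_apply, hlift]
    exact hPA _ (hlift ▸ apply_sub_smul_one_apply_eq_zero hCA hw _)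

theorem zero_mem_shiftProducts_of_isNilpotent [CharZero K] (hAB : ⁅A, B⁆ = C)
    (hCA : ⁅C, A⁆ = (2 * t) • A) (hA : IsNilpotent A) :
    0 ∈ shiftProducts C (AddSubgroup.zmultiples t) := by
  obtain ⟨P₀, hP₀, hker⟩ := exists_mem_shiftProducts_pow_apply_eq_zero hAB hCA hA 0
  suffices h : ∀ i, ∃ P ∈ shiftProducts C (AddSubgroup.zmultiples t),
      ∀ v, (A ^ i) v = 0 → P v = 0 by
    obtain ⟨N, hN⟩ := hA
    obtain ⟨P, hP, hPv⟩ := h N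
    rwa [show P = 0 from LinearMap.ext fun v ↦ hPv v (by rw [hN, LinearMap.zero_apply])] at hP
  intro i
  induction i with
  | zero => exact ⟨1, one_mem _, fun v hv ↦ hv⟩
  | succ i ih =>
    obtain ⟨P, hP, hPv⟩ := ih
    obtain ⟨Q, hQ, hPQ⟩ := exists_mul_eq_mul_of_mem_shiftProducts hCA hP
    refine ⟨P₀ * Q, mul_mem hP₀ hQ, fun v hv ↦ hker (Q v) ?_⟩
    have hPAv : P (A v) = 0 := hPv _ (by rwa [← Module.End.mul_apply, ← pow_succ])
    exact (LinearMap.congr_fun hPQ v).symm.trans hPAv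

theorem iSup_maxGenEigenspace_lie_eq_top [CharZero K] [FiniteDimensional K V]
    (hA : IsNilpotent A) (hAB : ⁅⁅A, B⁆, A⁆ = (2 : K) • A) :
    ⨆ μ, Module.End.maxGenEigenspace ⁅A, B⁆ μ = ⊤ :=
  iSup_maxGenEigenspace_eq_top_of_zero_mem_shiftProducts <|
    zero_mem_shiftProducts_of_isNilpotent (t := 1) rfl (by rwa [mul_one]) hA

theorem isNilpotent_lie_of_commute [CharZero K] (hA : IsNilpotent A) (hAB : Commute A ⁅A, B⁆) :
    IsNilpotent ⁅A, B⁆ := by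
  have h : 0 ∈ shiftProducts ⁅A, B⁆ (AddSubgroup.zmultiples (0 : K)) :=
    zero_mem_shiftProducts_of_isNilpotent rfl (by simp [hAB.symm.lie_eq]) hA
  rw [AddSubgroup.zmultiples_zero_eq_bot] at h
  exact isNilpotent_of_zero_mem_shiftProducts h

lemma pow_apply_mul_pow_apply (hAB : Commute A ⁅A, B⁆) {i : ℕ} {v : V}
    (hv : A ((A ^ i) v) = 0) (k : ℕ) :
    (A ^ i) (((A * B) ^ k) v) = (i + 1 : K) ^ k • (⁅A, B⁆ ^ k) ((A ^ i) v) := by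
  have hlie : ⁅⁅A, B⁆, A⁆ = (2 * 0 : K) • A := by simp [hAB.symm.lie_eq]
  induction k generalizing v with
  | zero => simp
  | succ k ih =>
    have hstep : (A ^ i) ((A * B) v) = (i + 1 : K) • ⁅A, B⁆ ((A ^ i) v) := by
      simpa [pow_succ] using pow_apply_apply_of_lie_eq (t := (0 : K)) rfl hlie hv
    have hkilled : A ((A ^ i) ((A * B) v)) = 0 := by
      rw [hstep, map_smul, ← Module.End.mul_apply A, hAB.eq, Module.End.mul_apply, hv, map_zero,
        smul_zero]
    rw [pow_succ, Module.End.mul_apply, ih hkilled, hstep, map_smul, smul_smul, ← pow_succ,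
      pow_succ ⁅A, B⁆, Module.End.mul_apply]

theorem isNilpotent_mul_of_commute_lie [CharZero K] (hA : IsNilpotent A)
    (hAB : Commute A ⁅A, B⁆) : IsNilpotent (A * B) := by
  obtain ⟨m, hm⟩ := isNilpotent_lie_of_commute hA hAB
  have h : ∀ i v, (A ^ i) v = 0 → ((A * B) ^ (m * i)) v = 0 := by
    intro i
    induction i with
    | zero => exact fun v hv ↦ hv
    | succ i ih =>
      intro v hv
      rw [pow_succ', Module.End.mul_apply] at hv
      have hzero : (A ^ i) (((A * B) ^ m) v) = 0 := by
        rw [pow_apply_mul_pow_apply hAB hv, hm, LinearMap.zero_apply, smul_zero]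
      rw [mul_add_one, pow_add, Module.End.mul_apply, ih _ hzero]
  obtain ⟨N, hN⟩ := hA
  exact ⟨m * N, LinearMap.ext fun v ↦ h N v (by rw [hN, LinearMap.zero_apply])⟩

end NilpotentEndomorphism

section GeneralizedEigenvector

variable {K A L L' : Type*}

lemma mul_mem_maxGenEigenspace_ad [CommRing K] [Ring A] [Algebra K A] {x a b : A} {μ ν : K}
    (ha : a ∈ (ad K A x).maxGenEigenspace μ) (hb : b ∈ (ad K A x).maxGenEigenspace ν) :
    a * b ∈ (ad K A x).maxGenEigenspace (μ + ν) := by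
  let mulHom : A →ₗ⁅K, A⁆ A →ₗ[K] A :=
    { LinearMap.mul K A with
      map_lie' := fun {y m} ↦ LinearMap.ext fun n ↦ by
        simp [LieRing.of_associative_ring_bracket, mul_sub, mul_assoc] }
  apply LieModule.weight_vector_multiplication A A A
    (TensorProduct.LieModule.liftLie K A A A A mulHom) μ ν x
  exact ⟨⟨a, ha⟩ ⊗ₜ ⟨b, hb⟩, by simp [mulHom]⟩

lemma pow_mem_maxGenEigenspace_ad [CommRing K] [Ring A] [Algebra K A] {x a : A} {c : K}
    (ha : a ∈ (ad K A x).maxGenEigenspace c) (k : ℕ) :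
    a ^ k ∈ (ad K A x).maxGenEigenspace (k * c) := by
  induction k with
  | zero =>
    rw [Module.End.mem_maxGenEigenspace]
    exact ⟨1, by simp [LieRing.of_associative_ring_bracket]⟩
  | succ k ih =>
    rw [pow_succ, Nat.cast_add_one, add_one_mul]
    exact mul_mem_maxGenEigenspace_ad ih ha

lemma isNilpotent_of_mem_maxGenEigenspace_ad [Field K] [CharZero K] [Ring A] [Algebra K A]
    [FiniteDimensional K A] {x a : A} {c : K} (hc : c ≠ 0)
    (ha : a ∈ (ad K A x).maxGenEigenspace c) : IsNilpotent a := by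
  have hfin : {μ : K | (ad K A x).maxGenEigenspace μ ≠ ⊥}.Finite :=
    WellFoundedGT.finite_ne_bot_of_iSupIndep (ad K A x).independent_maxGenEigenspace
  have hinj : Function.Injective fun k : ℕ ↦ (k * c : K) :=
    (mul_left_injective₀ hc).comp Nat.cast_injective
  obtain ⟨_, ⟨k, rfl⟩, hk⟩ := (Set.infinite_range_of_injective hinj).exists_notMem_finite hfin
  rw [Set.mem_ofPred_eq, not_not] at hk
  exact ⟨k, (Submodule.mem_bot K).1 (hk ▸ pow_mem_maxGenEigenspace_ad ha k)⟩

lemma map_mem_maxGenEigenspace_ad [CommRing K] [LieRing L] [LieAlgebra K L] [LieRing L']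
    [LieAlgebra K L'] (φ : L →ₗ⁅K⁆ L') {x y : L} {c : K}
    (hy : y ∈ (ad K L x).maxGenEigenspace c) : φ y ∈ (ad K L' (φ x)).maxGenEigenspace c := by
  rw [Module.End.mem_maxGenEigenspace] at hy ⊢
  obtain ⟨k, hk⟩ := hy
  have hcomm : (ad K L' (φ x) - c • 1) ∘ₗ (φ : L →ₗ[K] L') =
      (φ : L →ₗ[K] L') ∘ₗ (ad K L x - c • 1) :=
    LinearMap.ext fun z ↦ by simp
  have hpow := LinearMap.congr_fun (Module.End.commute_pow_left_of_commute hcomm k) y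
  rw [LinearMap.comp_apply, LinearMap.comp_apply, hk, map_zero] at hpow
  exact ⟨k, hpow⟩

theorem isNilpotent_ad_of_mem_maxGenEigenspace [Field K] [CharZero K] [LieRing L] [LieAlgebra K L]
    [FiniteDimensional K L] {x y : L} {c : K} (hc : c ≠ 0)
    (hy : y ∈ (ad K L x).maxGenEigenspace c) : IsNilpotent (ad K L y) :=
  isNilpotent_of_mem_maxGenEigenspace_ad hc (map_mem_maxGenEigenspace_ad (ad K L) hy)

lemma pow_ad_apply_mem_maxGenEigenspace [CommRing K] [LieRing L] [LieAlgebra K L] {x y z : L}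
    {μ ν : K} (hy : y ∈ (ad K L x).maxGenEigenspace μ) (hz : z ∈ (ad K L x).maxGenEigenspace ν)
    (k : ℕ) : ((ad K L y) ^ k) z ∈ (ad K L x).maxGenEigenspace (k * μ + ν) := by
  induction k with
  | zero => simpa using hz
  | succ k ih =>
    rw [pow_succ', Module.End.mul_apply, Nat.cast_add_one, add_one_mul, add_right_comm,
      add_comm _ μ]
    exact LieModule.lie_mem_maxGenEigenspace_toEnd hy ih

end GeneralizedEigenvector

section AdNilpotentSpan

lemma isNilpotent_ad_apply_lieEquiv {R L L' : Type*} [CommRing R] [LieRing L] [LieAlgebra R L]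
    [LieRing L'] [LieAlgebra R L'] (e : L ≃ₗ⁅R⁆ L') {y : L} (hy : IsNilpotent (ad R L y)) :
    IsNilpotent (ad R L' (e y)) := by
  rw [← conj_ad_apply]
  exact hy.map e.toLinearEquiv.conjRingEquiv

variable {K L : Type*} [Field K] [LieRing L] [LieAlgebra K L]

variable (K L) in
/-- The linear span of the ad-nilpotent elements of a Lie algebra. -/
def adNilpotentSpan : Submodule K L :=
  Submodule.span K {y | IsNilpotent (ad K L y)}

lemma mem_adNilpotentSpan_of_isNilpotent {y : L} (hy : IsNilpotent (ad K L y)) :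
    y ∈ adNilpotentSpan K L :=
  Submodule.subset_span hy

variable [CharZero K]

lemma lie_mem_adNilpotentSpan_of_isNilpotent {e w : L} (he : IsNilpotent (ad K L e))
    (hw : IsNilpotent (ad K L w)) (h : ∀ k, ((ad K L e) ^ (k + 2)) w ∈ adNilpotentSpan K L) :
    ⁅e, w⁆ ∈ adNilpotentSpan K L := by
  let _ : Module ℚ L := Module.compHom L (algebraMap ℚ K)
  have hsmul (q : ℚ) (v : L) : q • v = (q : K) • v := rfl
  let _ : LieAlgebra ℚ L := { lie_smul := fun q x y ↦ lie_smul (q : K) x y }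
  rw [← LieDerivation.coe_ad_apply_eq_ad_apply] at he
  let φ : L ≃ₗ⁅K⁆ L := LieDerivation.exp _ he
  obtain ⟨n, hn⟩ := id he
  rw [LieDerivation.coe_ad_apply_eq_ad_apply] at hn
  have hφw : φ w = ∑ k ∈ Finset.range n,
      ((k + 2).factorial : ℚ)⁻¹ • ((ad K L e) ^ (k + 2)) w + ⁅e, w⁆ + w := by
    have hn' : (ad K L e) ^ (n + 2) = 0 := by rw [pow_add, hn, zero_mul]
    rw [LieDerivation.exp_map_apply, LieDerivation.coe_ad_apply_eq_ad_apply,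
      IsNilpotent.exp_eq_sum hn', LinearMap.sum_apply, Finset.sum_range_succ',
      Finset.sum_range_succ']
    simp
  have htail : ∑ k ∈ Finset.range n, ((k + 2).factorial : ℚ)⁻¹ • ((ad K L e) ^ (k + 2)) w ∈
      adNilpotentSpan K L :=
    sum_mem fun k _ ↦ hsmul _ _ ▸ Submodule.smul_mem _ _ (h k)
  rw [← Submodule.add_mem_iff_right _ htail,
    ← Submodule.add_mem_iff_left _ (mem_adNilpotentSpan_of_isNilpotent hw), ← hφw]
  exact mem_adNilpotentSpan_of_isNilpotent (isNilpotent_ad_apply_lieEquiv φ hw)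

variable [FiniteDimensional K L]

lemma lie_mem_adNilpotentSpan_of_mem_maxGenEigenspace {h e w : L} {μ : K}
    (hhe : ⁅h, e⁆ = (2 : K) • e) (hw : w ∈ (ad K L h).maxGenEigenspace μ) :
    ⁅w, e⁆ ∈ adNilpotentSpan K L := by
  have mem_of_weight {u : L} {ν : K} (hν : ν ≠ 0) (hu : u ∈ (ad K L h).maxGenEigenspace ν) :
      u ∈ adNilpotentSpan K L :=
    mem_adNilpotentSpan_of_isNilpotent (isNilpotent_ad_of_mem_maxGenEigenspace hν hu)
  have he : e ∈ (ad K L h).maxGenEigenspace 2 :=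
    Module.End.eigenspace_le_maxGenEigenspace (Module.End.mem_eigenspace_iff.2 hhe)
  by_cases hμ : μ + 2 = 0
  · have hμ₀ : μ ≠ 0 := by
      rintro rfl
      exact two_ne_zero (zero_add (2 : K) ▸ hμ)
    rw [← lie_skew, neg_mem_iff]
    refine lie_mem_adNilpotentSpan_of_isNilpotent
      (isNilpotent_ad_of_mem_maxGenEigenspace two_ne_zero he)
      (isNilpotent_ad_of_mem_maxGenEigenspace hμ₀ hw)
      fun k ↦ mem_of_weight ?_ (pow_ad_apply_mem_maxGenEigenspace he hw (k + 2))
    have hweight : ((k + 2 : ℕ) : K) * 2 + μ = 2 * (k + 1) := by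
      push_cast
      linear_combination hμ
    rw [hweight]
    exact mul_ne_zero two_ne_zero (Nat.cast_add_one_ne_zero k)
  · exact mem_of_weight hμ (LieModule.lie_mem_maxGenEigenspace_toEnd hw he)

end AdNilpotentSpan

section Killing

variable {K L : Type*} [Field K] [CharZero K] [LieRing L] [LieAlgebra K L]

lemma killingForm_eq_zero_of_lie_lie_eq_zero {y z : L} (hy : IsNilpotent (ad K L y))
    (hyz : ⁅y, ⁅y, z⁆⁆ = 0) : killingForm K L y z = 0 := by
  have hcomm : Commute (ad K L y) ⁅ad K L y, ad K L z⁆ := by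
    rw [commute_iff_lie_eq, ← LieHom.map_lie, ← LieHom.map_lie, hyz, map_zero]
  exact (LinearMap.isNilpotent_trace_of_isNilpotent
    (isNilpotent_mul_of_commute_lie hy hcomm)).eq_zero

variable [FiniteDimensional K L] [IsKilling K L]

lemma mem_range_ad_mul_ad_of_isNilpotent {y : L} (hy : IsNilpotent (ad K L y)) :
    y ∈ LinearMap.range (ad K L y * ad K L y) := by
  have hnondeg : (killingForm K L).Nondegenerate := IsKilling.killingForm_nondegenerate K L
  have hrefl : (killingForm K L).IsRefl := (LieModule.traceForm_isSymm K L L).isRefl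
  rw [← LinearMap.BilinForm.orthogonal_orthogonal hnondeg hrefl (LinearMap.range _),
    LinearMap.BilinForm.mem_orthogonal_iff]
  intro z hz
  have hzero : ⁅y, ⁅y, z⁆⁆ = 0 := hnondeg.1 _ fun w ↦ by
    rw [LieModule.traceForm_apply_lie_apply', LieModule.traceForm_apply_lie_apply', neg_neg,
      LieModule.traceForm_comm]
    exact hz _ ⟨w, rfl⟩
  exact hrefl y z (killingForm_eq_zero_of_lie_lie_eq_zero hy hzero)

theorem exists_lie_lie_eq_two_smul_of_isNilpotent {y : L} (hy : IsNilpotent (ad K L y)) :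
    ∃ z : L, ⁅⁅y, z⁆, y⁆ = (2 : K) • y := by
  obtain ⟨z, hz⟩ := mem_range_ad_mul_ad_of_isNilpotent hy
  change ⁅y, ⁅y, z⁆⁆ = y at hz
  refine ⟨(-2 : K) • z, ?_⟩
  rw [← lie_skew, lie_smul, lie_smul, hz, neg_smul, neg_neg]

theorem IsInertial.of_isNilpotent_ad {y : L} (hy₀ : y ≠ 0) (hy : IsNilpotent (ad K L y)) :
    IsInertial K y := by
  obtain ⟨z, hz⟩ := exists_lie_lie_eq_two_smul_of_isNilpotent hy
  exact ⟨hy₀, ⁅y, z⁆, 2, two_ne_zero, hz⟩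

theorem lie_mem_adNilpotentSpan (w : L) {y : L} (hy : y ∈ adNilpotentSpan K L) :
    ⁅w, y⁆ ∈ adNilpotentSpan K L := by
  induction hy using Submodule.span_induction with
  | mem e he =>
    obtain ⟨z, hz⟩ := exists_lie_lie_eq_two_smul_of_isNilpotent he
    have htop : ⨆ μ, (ad K L ⁅e, z⁆).maxGenEigenspace μ = ⊤ := by
      rw [LieHom.map_lie]
      apply iSup_maxGenEigenspace_lie_eq_top he
      rw [← LieHom.map_lie, ← LieHom.map_lie, hz, map_smul]
    have hw : w ∈ ⨆ μ, (ad K L ⁅e, z⁆).maxGenEigenspace μ := htop ▸ Submodule.mem_top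
    induction hw using Submodule.iSup_induction' with
    | mem μ w hw => exact lie_mem_adNilpotentSpan_of_mem_maxGenEigenspace hz hw
    | zero => rw [zero_lie]; exact zero_mem _
    | add w₁ w₂ _ _ h₁ h₂ => rw [add_lie]; exact add_mem h₁ h₂
  | zero => rw [lie_zero]; exact zero_mem _
  | add y₁ y₂ _ _ h₁ h₂ => rw [lie_add]; exact add_mem h₁ h₂
  | smul c y _ h => rw [lie_smul]; exact Submodule.smul_mem _ c h

theorem InertiallyGenerated.of_adNilpotentSpan_eq_top (h : adNilpotentSpan K L = ⊤) :
    InertiallyGenerated K L := by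
  let b := Module.Basis.ofSpan h.ge
  have hb (i) : IsInertial K (b i) :=
    .of_isNilpotent_ad (b.ne_zero i) (Module.Basis.ofSpan_subset h.ge ⟨i, rfl⟩)
  have : Fintype _ := FiniteDimensional.fintypeBasisIndex b
  exact ⟨_, b.reindex (Fintype.equivFin _), fun i ↦ by
    rw [Module.Basis.reindex_apply]
    exact hb _⟩

end Killing

theorem adNilpotentSpan_eq_top {K L : Type*} [Field K] [CharZero K] [LieRing L] [LieAlgebra K L]
    [FiniteDimensional K L] [IsSimple K L] {y : L} (hy₀ : y ≠ 0) (hy : IsNilpotent (ad K L y)) :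
    adNilpotentSpan K L = ⊤ := by
  let I : LieIdeal K L := { adNilpotentSpan K L with lie_mem := lie_mem_adNilpotentSpan _ }
  have hyI : y ∈ I := mem_adNilpotentSpan_of_isNilpotent hy
  have hI : I = ⊤ := (IsSimple.eq_bot_or_eq_top I).resolve_left fun hbot ↦
    hy₀ ((LieSubmodule.mem_bot y).1 (hbot ▸ hyI))
  exact congrArg LieSubmodule.toSubmodule hI

theorem stmt_10_general (F L : Type*) [Field F] [CharZero F] [LieRing L] [LieAlgebra F L]
    [FiniteDimensional F L] [IsSimple F L]
    (hx : ∃ (x : L) (c : F), c ≠ 0 ∧ Module.End.HasEigenvalue (ad F L x) c) :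
    InertiallyGenerated F L := by
  obtain ⟨x, c, hc, hxc⟩ := hx
  obtain ⟨y, hy, hy₀⟩ := hxc.exists_hasEigenvector
  have hy_nilpotent : IsNilpotent (ad F L y) :=
    isNilpotent_ad_of_mem_maxGenEigenspace hc (Module.End.eigenspace_le_maxGenEigenspace hy)
  exact .of_adNilpotentSpan_eq_top (adNilpotentSpan_eq_top hy₀ hy_nilpotent)

/-- Let `F` have characteristic zero and let `L` be a simple Lie subalgebra of `sl n F`.
If some adjoint endomorphism `ad x : L → L` has a nonzero eigenvalue in `F`,
then `L` is inertially generated. -/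
theorem stmt_10 (F : Type*) [Field F] [CharZero F] (n : ℕ) (hn : 0 < n)
    (L : LieSubalgebra F (Matrix (Fin n) (Fin n) F))
    (hL : L ≤ LieAlgebra.SpecialLinear.sl (Fin n) F)
    (hsimple : LieAlgebra.IsSimple F L)
    (hx : ∃ (x : L) (c : F), c ≠ 0 ∧
      Module.End.HasEigenvalue (LieAlgebra.ad F L x) c) :
    InertiallyGenerated F L :=
  stmt_10_general F L hx
end

section
/- Let F be a field of characteristic 0, n a positive integer, and L a Lie subalgebra of sl_n(F) that is simple as a Lie algebra. If there exists x ∈ L such that the adjoint endomorphism ad x : L → L has two distinct eigenvalues λ₁ ≠ λ₂ in F, then L is inertially generated. -/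
attribute [local instance 100] LieRing.ofAssociativeRing

/-!
A semisimple part of `ad x` has its eigenvalues in an algebraic closure `K` of `F`; replacing each
eigenvalue by its normalized trace gives a derivation of `L`, hence `ad h` for some `h ∈ L`, which
is diagonalizable over `F` and still has every eigenvalue in `F` and every eigenvector over `F` that
`ad x` had. Diagonalizability gives `L = ker (ad h) + range (ad h)`, and `ker (ad h)` preserves
`range (ad h)`, so the Lie subalgebra generated by `range (ad h)` is an ideal and, by simplicity,
equals `L`. The space `range (ad h)` is spanned by inertial elements, namely the eigenvectors of
`ad h` with nonzero eigenvalue.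

The span of the inertial elements is itself a Lie subalgebra, hence equals `L`: an inertial `y` is
ad-nilpotent, `exp (t • ad y)` is an automorphism and permutes the inertial elements, and the
derivative at `t = 0` of the polynomial curve `exp (t • ad y) z` is `⁅y, z⁆`.
-/

open Polynomial TensorProduct LieAlgebra Module

section LinearAlgebra

theorem isCoprime_minpoly_of_ne {F K : Type*} [Field F] [Field K] [Algebra F K]
    [Algebra.IsIntegral F K] {a b : K} (hab : minpoly F a ≠ minpoly F b) :
    IsCoprime (minpoly F a) (minpoly F b) := by
  have hint (c : K) : IsIntegral F c := Algebra.IsIntegral.isIntegral c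
  refine ((minpoly.irreducible (hint a)).coprime_iff_not_dvd).mpr fun hdvd ↦ hab ?_
  exact eq_of_monic_of_associated (minpoly.monic (hint a)) (minpoly.monic (hint b))
    ((minpoly.irreducible (hint a)).associated_of_dvd (minpoly.irreducible (hint b)) hdvd)

theorem exists_forall_dvd_sub_of_pairwise_isCoprime {R ι : Type*} [CommRing R] [Finite ι]
    {p : ι → R} (hp : Pairwise (Function.onFun IsCoprime p)) (r : ι → R) :
    ∃ q, ∀ i, p i ∣ q - r i := by
  have hspan : Pairwise (Function.onFun IsCoprime fun i ↦ Ideal.span {p i}) := fun i j hij ↦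
    (Ideal.isCoprime_span_singleton_iff _ _).mpr (hp hij)
  simpa only [Ideal.mem_span_singleton] using Ideal.exists_forall_sub_mem_ideal hspan r

theorem exists_forall_minpoly_pow_dvd_sub_C_normalizedTrace (F : Type*) {K : Type*} [Field F]
    [CharZero F] [Field K] [Algebra F K] [Algebra.IsIntegral F K] (s : Finset K) (k : ℕ) :
    ∃ Q : F[X], ∀ a ∈ s, minpoly F a ^ k ∣ Q - C (Algebra.normalizedTrace F K a) := by
  classical
  have hcop : Pairwise (Function.onFun IsCoprime
      fun p : s.image (minpoly F) ↦ (p : F[X]) ^ k) := by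
    rintro ⟨p, hp⟩ ⟨q, hq⟩ hpq
    obtain ⟨a, -, rfl⟩ := Finset.mem_image.mp hp
    obtain ⟨b, -, rfl⟩ := Finset.mem_image.mp hq
    exact (isCoprime_minpoly_of_ne fun h ↦ hpq (Subtype.ext h)).pow
  -- The normalized trace of `a` depends only on the minimal polynomial of `a`.
  obtain ⟨Q, hQ⟩ := exists_forall_dvd_sub_of_pairwise_isCoprime hcop
    fun p ↦ C ((p.1.natDegree : F)⁻¹ • -p.1.nextCoeff)
  refine ⟨Q, fun a ha ↦ ?_⟩
  rw [Algebra.normalizedTrace_minpoly]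
  exact hQ ⟨minpoly F a, Finset.mem_image_of_mem _ ha⟩

theorem hasEigenvalue_of_mem_maxGenEigenspace {K V : Type*} [Field K] [AddCommGroup V]
    [Module K V] {f : End K V} {a : K} {v : V} (hv : v ∈ f.maxGenEigenspace a) (hv0 : v ≠ 0) :
    f.HasEigenvalue a := by
  have h : f.HasUnifEigenvalue a ⊤ := (Submodule.ne_bot_iff _).mpr ⟨v, hv, hv0⟩
  exact h.lt zero_lt_one

theorem aeval_apply_eq_smul_of_mem_maxGenEigenspace {F K V : Type*} [Field F] [Field K]
    [Algebra F K] [AddCommGroup V] [Module F V] [Module K V] [IsScalarTower F K V]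
    [FiniteDimensional K V] {f : End K V} {a : K} {v : V} (hv : v ∈ f.maxGenEigenspace a)
    {Q : F[X]} {c : F} (hQ : minpoly F a ^ finrank K V ∣ Q - C c) :
    aeval f Q v = algebraMap F K c • v := by
  have hroot : X - C a ∣ (minpoly F a).map (algebraMap F K) := by
    rw [dvd_iff_isRoot, IsRoot, eval_map_algebraMap]
    exact minpoly.aeval F a
  have hpow : (X - C a) ^ finrank K V ∣ (Q - C c).map (algebraMap F K) :=
    (pow_dvd_pow_of_dvd hroot _).trans (by simpa using Polynomial.map_dvd (algebraMap F K) hQ)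
  obtain ⟨q, hq⟩ := hpow
  have hkill : aeval f ((X - C a) ^ finrank K V) v = 0 := by
    rw [End.maxGenEigenspace_eq_genEigenspace_finrank, End.mem_genEigenspace_nat,
      LinearMap.mem_ker] at hv
    simpa [Algebra.algebraMap_eq_smul_one] using hv
  have hsub : aeval f (Q - C c) v = 0 := by
    rw [← aeval_map_algebraMap K, hq, mul_comm, map_mul, End.mul_apply, hkill, map_zero]
  rw [map_sub, aeval_C, LinearMap.sub_apply, sub_eq_zero] at hsub
  rw [hsub, Module.algebraMap_end_apply, algebraMap_smul]

theorem mem_of_forall_sum_pow_smul_mem {F V : Type*} [Field F] [Infinite F] [AddCommGroup V]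
    [Module F V] {S : Submodule F V} {n : ℕ} {v : ℕ → V}
    (h : ∀ t : F, ∑ i ∈ Finset.range n, t ^ i • v i ∈ S) {i : ℕ} (hi : i < n) : v i ∈ S := by
  by_contra hv
  obtain ⟨φ, hφ, hS⟩ := Submodule.exists_dual_map_eq_bot_of_notMem hv inferInstance
  let p : F[X] := ∑ j ∈ Finset.range n, C (φ (v j)) * X ^ j
  have hp : p = 0 := Polynomial.funext fun t ↦ by
    have hφt : φ (∑ j ∈ Finset.range n, t ^ j • v j) = 0 := by
      rw [← Submodule.mem_bot F, ← hS]
      exact Submodule.mem_map_of_mem (h t)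
    simpa only [p, eval_finsetSum, eval_mul, eval_C, eval_pow, eval_X, eval_zero, map_sum, map_smul,
      smul_eq_mul, mul_comm (φ _)] using hφt
  have hcoeff : p.coeff i = φ (v i) := by simp [p, finsetSum_coeff, coeff_X_pow, hi]
  exact hφ (by rw [← hcoeff, hp, coeff_zero])

theorem ker_sup_range_eq_top_of_iSup_eigenspace_eq_top {F V : Type*} [Field F] [AddCommGroup V]
    [Module F V] {f : End F V} (hf : ⨆ c, f.eigenspace c = ⊤) :
    LinearMap.ker f ⊔ LinearMap.range f = ⊤ := by
  rw [eq_top_iff, ← hf, iSup_le_iff]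
  intro c v hv
  rw [End.mem_eigenspace_iff] at hv
  rcases eq_or_ne c 0 with rfl | hc
  · exact Submodule.mem_sup_left (by simpa using hv)
  · exact Submodule.mem_sup_right ⟨c⁻¹ • v, by rw [map_smul, hv, inv_smul_smul₀ hc]⟩

theorem range_le_of_iSup_eigenspace_eq_top {F V : Type*} [Field F] [AddCommGroup V]
    [Module F V] {f : End F V} (hf : ⨆ c, f.eigenspace c = ⊤) {S : Submodule F V}
    (hS : ∀ c ≠ 0, f.eigenspace c ≤ S) : LinearMap.range f ≤ S := by
  rw [LinearMap.range_eq_map, ← hf, Submodule.map_iSup, iSup_le_iff]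
  rintro c _ ⟨v, hv, rfl⟩
  rw [End.mem_eigenspace_iff.mp hv]
  rcases eq_or_ne c 0 with rfl | hc
  · simp
  · exact S.smul_mem c (hS c hc hv)

theorem isNilpotent_of_mul_sub_mul_eq_smul {F A : Type*} [Field F] [CharZero F] [Ring A]
    [Algebra F A] [FiniteDimensional F A] {x y : A} {c : F} (hc : c ≠ 0)
    (h : x * y - y * x = c • y) : IsNilpotent y := by
  by_contra hnil
  have hpow (k : ℕ) : x * y ^ k - y ^ k * x = (k * c) • y ^ k := by
    induction k with
    | zero => simp
    | succ k ih =>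
      calc x * y ^ (k + 1) - y ^ (k + 1) * x
          = (x * y ^ k - y ^ k * x) * y + y ^ k * (x * y - y * x) := by
            rw [pow_succ]; noncomm_ring
        _ = ((k + 1 : ℕ) * c) • y ^ (k + 1) := by
            rw [ih, h, smul_mul_assoc, mul_smul_comm, ← pow_succ, ← add_smul]
            push_cast
            ring_nf
  let T : End F A := LinearMap.mulLeft F x - LinearMap.mulRight F x
  have heigen (k : ℕ) : T.HasEigenvalue (k * c) :=
    End.hasEigenvalue_of_hasEigenvector (x := y ^ k)
      ⟨End.mem_eigenspace_iff.mpr (hpow k), fun h0 ↦ hnil ⟨k, h0⟩⟩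
  have hinj : Function.Injective fun k : ℕ ↦ (k : F) * c := fun a b hab ↦ by simpa [hc] using hab
  exact Set.infinite_of_injective_forall_mem hinj heigen T.finite_hasEigenvalue

end LinearAlgebra

section RationalPart

/-- `d` is a *rational part* of the endomorphism `f` of an `F`-space: over the extension `K` of
`F`, it acts on the generalized eigenspace of `f` with eigenvalue `a` as the normalized trace of
`a`. It plays the role of the semisimple part of `f`, with eigenvalues forced into `F`. -/
def IsRationalPart {F : Type*} (K : Type*) {V : Type*} [Field F] [CharZero F] [Field K]
    [Algebra F K] [Algebra.IsIntegral F K] [AddCommGroup V] [Module F V] (f d : End F V) : Prop :=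
  ∀ a, ∀ v ∈ End.maxGenEigenspace (f.baseChange K) a,
    d.baseChange K v = algebraMap F K (Algebra.normalizedTrace F K a) • v

variable {F K V L : Type*} [Field F] [CharZero F] [Field K] [Algebra F K] [Algebra.IsIntegral F K]

theorem exists_isRationalPart (K : Type*) [Field K] [Algebra F K] [Algebra.IsIntegral F K]
    [AddCommGroup V] [Module F V] [FiniteDimensional F V] (f : End F V) :
    ∃ d, IsRationalPart K f d := by
  have hfin := End.finite_hasEigenvalue (f.baseChange K)
  obtain ⟨Q, hQ⟩ := exists_forall_minpoly_pow_dvd_sub_C_normalizedTrace F hfin.toFinset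
    (finrank K (K ⊗[F] V))
  refine ⟨aeval f Q, fun a v hv ↦ ?_⟩
  rcases eq_or_ne v 0 with rfl | hv0
  · simp
  have ha : a ∈ hfin.toFinset :=
    hfin.mem_toFinset.mpr (hasEigenvalue_of_mem_maxGenEigenspace hv hv0)
  have hbase : (aeval f Q).baseChange K = aeval (f.baseChange K) Q :=
    (aeval_algHom_apply (End.baseChangeHom F K V) f Q).symm
  rw [hbase]
  exact aeval_apply_eq_smul_of_mem_maxGenEigenspace hv (hQ a ha)

namespace IsRationalPart

theorem apply_eq_smul [AddCommGroup V] [Module F V] {f d : End F V} (hd : IsRationalPart K f d)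
    {c : F} {v : V} (hv : f v = c • v) : d v = c • v := by
  have hmem : (1 : K) ⊗ₜ[F] v ∈ End.maxGenEigenspace (f.baseChange K) (algebraMap F K c) :=
    End.mem_maxGenEigenspace _ _ _ |>.mpr ⟨1, by simp [hv]⟩
  exact FaithfullyFlat.tensorProduct_mk_injective (A := F) (B := K) V (by simpa using hd _ _ hmem)

theorem iSup_eigenspace_eq_top [IsAlgClosed K] [AddCommGroup V] [Module F V]
    [FiniteDimensional F V] {f d : End F V} (hd : IsRationalPart K f d) :
    ⨆ c, d.eigenspace c = ⊤ := by
  -- An `F`-linear retraction of `v ↦ 1 ⊗ v` which commutes with `d`.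
  let π : K ⊗[F] V →ₗ[F] V :=
    TensorProduct.lid F V ∘ₗ (Algebra.normalizedTrace F K).rTensor V
  have hπd (w : K ⊗[F] V) : d (π w) = π (d.baseChange K w) := by
    induction w with
    | zero => simp
    | tmul k v => simp [π]
    | add w₁ w₂ h₁ h₂ => simp only [map_add, h₁, h₂]
  have hπ (w : K ⊗[F] V) : π w ∈ ⨆ c, d.eigenspace c := by
    have hw : w ∈ ⨆ a, End.maxGenEigenspace (f.baseChange K) a := by
      rw [End.iSup_maxGenEigenspace_eq_top]; trivial
    induction hw using Submodule.iSup_induction' with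
    | zero => simp
    | add w₁ w₂ _ _ h₁ h₂ => rw [map_add]; exact add_mem h₁ h₂
    | mem a w hw =>
      refine Submodule.mem_iSup_of_mem (Algebra.normalizedTrace F K a)
        (End.mem_eigenspace_iff.mpr ?_)
      rw [hπd, hd a w hw, algebraMap_smul, map_smul]
  refine eq_top_iff.mpr fun v _ ↦ ?_
  have h1 : π (1 ⊗ₜ v) = v := by
    have : Algebra.normalizedTrace F K 1 = 1 := by
      simpa using Algebra.normalizedTrace_algebraMap_apply_eq_self (F := F) (K := K) 1
    simp [π, this]
  exact h1 ▸ hπ (1 ⊗ₜ v)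

variable [LieRing L] [LieAlgebra F L] [FiniteDimensional F L] {x : L} {d : End F L}

theorem baseChange_lie [IsAlgClosed K] (hd : IsRationalPart K (ad F L x) d) (u v : K ⊗[F] L) :
    d.baseChange K ⁅u, v⁆ = ⁅u, d.baseChange K v⁆ - ⁅v, d.baseChange K u⁆ := by
  have htop (w : K ⊗[F] L) : w ∈ ⨆ a, End.maxGenEigenspace ((ad F L x).baseChange K) a := by
    rw [End.iSup_maxGenEigenspace_eq_top]; trivial
  have had : (ad F L x).baseChange K = LieModule.toEnd K (K ⊗[F] L) (K ⊗[F] L) (1 ⊗ₜ x) :=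
    (LieModule.toEnd_baseChange ..).symm
  have hu := htop u
  induction hu using Submodule.iSup_induction' with
  | zero => simp
  | add u₁ u₂ _ _ h₁ h₂ =>
    simp only [add_lie, map_add, h₁, h₂, lie_add]
    abel
  | mem a u hu =>
    have hv := htop v
    induction hv using Submodule.iSup_induction' with
    | zero => simp
    | add v₁ v₂ _ _ h₁ h₂ =>
      simp only [add_lie, map_add, h₁, h₂, lie_add]
      abel
    | mem b v hv =>
      have huv : ⁅u, v⁆ ∈ End.maxGenEigenspace ((ad F L x).baseChange K) (a + b) := by
        rw [had] at hu hv ⊢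
        exact LieModule.lie_mem_maxGenEigenspace_toEnd hu hv
      rw [hd _ _ huv, hd _ _ hu, hd _ _ hv, lie_smul, lie_smul, ← lie_skew u v, map_add, map_add]
      module

theorem apply_lie [IsAlgClosed K] (hd : IsRationalPart K (ad F L x) d) (u v : L) :
    d ⁅u, v⁆ = ⁅u, d v⁆ - ⁅v, d u⁆ :=
  FaithfullyFlat.tensorProduct_mk_injective (A := F) (B := K) L <| by
    simpa [tmul_sub] using hd.baseChange_lie (1 ⊗ₜ u) (1 ⊗ₜ v)

end IsRationalPart

theorem exists_isRationalPart_ad (K : Type*) [Field K] [Algebra F K] [Algebra.IsIntegral F K]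
    [IsAlgClosed K] [LieRing L] [LieAlgebra F L] [FiniteDimensional F L] [IsKilling F L] (x : L) :
    ∃ h : L, IsRationalPart K (ad F L x) (ad F L h) := by
  obtain ⟨d, hd⟩ := exists_isRationalPart K (ad F L x)
  let D : LieDerivation F L L := { d with leibniz' := hd.apply_lie }
  obtain ⟨h, hh⟩ := LieDerivation.IsKilling.exists_eq_ad D
  have had : ad F L h = d := LinearMap.ext fun v ↦ show ad F L h v = D v by
    simpa using congrArg (fun D' : LieDerivation F L L ↦ D' v) hh
  exact ⟨h, had ▸ hd⟩

end RationalPart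

section LieSpan

variable {R L : Type*} [CommRing R] [LieRing L] [LieAlgebra R L]

theorem mem_normalizer_lieSpan {s : Set L} {z : L}
    (hz : ∀ w ∈ s, ⁅z, w⁆ ∈ LieSubalgebra.lieSpan R L s) :
    z ∈ (LieSubalgebra.lieSpan R L s).normalizer := by
  refine (LieSubalgebra.mem_normalizer_iff _ _).mpr fun w hw ↦ ?_
  induction hw using LieSubalgebra.lieSpan_induction with
  | mem w hw => exact hz w hw
  | zero => simp
  | add u v _ _ hu hv => rw [lie_add]; exact add_mem hu hv
  | smul t v _ hv => rw [lie_smul]; exact LieSubalgebra.smul_mem _ t hv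
  | lie u v hu hv hzu hzv =>
    rw [leibniz_lie]
    exact add_mem (LieSubalgebra.lie_mem _ hzu hv) (LieSubalgebra.lie_mem _ hu hzv)

theorem normalizer_lieSpan_range_ad_eq_top {h : L}
    (hh : LinearMap.ker (ad R L h) ⊔ LinearMap.range (ad R L h) = ⊤) :
    (LieSubalgebra.lieSpan R L (LinearMap.range (ad R L h) : Set L)).normalizer = ⊤ := by
  set G := LieSubalgebra.lieSpan R L (LinearMap.range (ad R L h) : Set L)
  have hrangeG : LinearMap.range (ad R L h) ≤ G.toSubmodule := LieSubalgebra.subset_lieSpan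
  have hker : LinearMap.ker (ad R L h) ≤ G.normalizer.toSubmodule := by
    intro z hz
    refine mem_normalizer_lieSpan ?_
    rintro _ ⟨u, rfl⟩
    have hhz : ⁅z, h⁆ = 0 := by rw [← lie_skew, ← ad_apply R, LinearMap.mem_ker.mp hz, neg_zero]
    exact hrangeG ⟨⁅z, u⁆, by simp [leibniz_lie z h u, hhz]⟩
  have hrange : LinearMap.range (ad R L h) ≤ G.normalizer.toSubmodule :=
    hrangeG.trans G.le_normalizer
  rw [← LieSubalgebra.toSubmodule_inj, LieSubalgebra.top_toSubmodule, eq_top_iff, ← hh]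
  exact sup_le hker hrange

theorem lieSpan_range_ad_eq_top [IsSimple R L] {h : L} (hh0 : ad R L h ≠ 0)
    (hh : LinearMap.ker (ad R L h) ⊔ LinearMap.range (ad R L h) = ⊤) :
    LieSubalgebra.lieSpan R L (LinearMap.range (ad R L h) : Set L) = ⊤ := by
  set G := LieSubalgebra.lieSpan R L (LinearMap.range (ad R L h) : Set L)
  obtain ⟨I, hI⟩ : ∃ I : LieIdeal R L, I.toLieSubalgebra = G :=
    (LieSubalgebra.exists_lieIdeal_coe_eq_iff R G).mpr fun z w hw ↦
      (G.mem_normalizer_iff z).mp (normalizer_lieSpan_range_ad_eq_top hh ▸ trivial) w hw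
  obtain ⟨v, hv⟩ := DFunLike.ne_iff.mp hh0
  have hvI : ad R L h v ∈ I.toLieSubalgebra := hI ▸ LieSubalgebra.subset_lieSpan ⟨v, rfl⟩
  rcases IsSimple.eq_bot_or_eq_top (R := R) I with rfl | rfl
  · exact absurd (by simpa using hvI) hv
  · simpa using hI.symm

end LieSpan

section Inertial

variable {F L : Type*} [Field F] [LieRing L] [LieAlgebra F L]

theorem exists_lieEquiv_apply_eq_sum_pow_smul_ad_pow [CharZero F] {y : L} {N : ℕ}
    (hN : ad F L y ^ N = 0) (t : F) :
    ∃ e : L ≃ₗ⁅F⁆ L, ∀ z,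
      e z = ∑ i ∈ Finset.range N, t ^ i • ((i.factorial : F)⁻¹ • (ad F L y ^ i) z) := by
  let _ : Module ℚ L := Module.compHom L (algebraMap ℚ F)
  have hsmul (q : ℚ) (v : L) : q • v = (q : F) • v := rfl
  let _ : LieAlgebra ℚ L := { lie_smul := fun q u v ↦ by simp only [hsmul, lie_smul] }
  let D : LieDerivation F L L := LieDerivation.ad F L (t • y)
  have hD : D.toLinearMap = t • ad F L y := by ext v; simp [D]
  have hDN : D.toLinearMap ^ N = 0 := by rw [hD, _root_.smul_pow, hN, smul_zero]
  have hDnil : IsNilpotent D.toLinearMap := ⟨N, hDN⟩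
  refine ⟨D.exp hDnil, fun z ↦ ?_⟩
  rw [LieDerivation.exp_map_apply, IsNilpotent.exp_eq_sum hDN, LinearMap.sum_apply]
  refine Finset.sum_congr rfl fun i _ ↦ ?_
  rw [LinearMap.smul_apply, hsmul, hD, _root_.smul_pow, LinearMap.smul_apply, smul_comm]
  simp

theorem exists_isInertial_of_hasEigenvalue_ad {x : L} {c : F} (hc : c ≠ 0)
    (hx : (ad F L x).HasEigenvalue c) : ∃ y : L, IsInertial F y := by
  obtain ⟨y, hy, hy0⟩ := hx.exists_hasEigenvector
  exact ⟨y, hy0, x, c, hc, End.mem_eigenspace_iff.mp hy⟩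

namespace IsInertial

theorem map_lieEquiv {L' : Type*} [LieRing L'] [LieAlgebra F L'] {y : L} (hy : IsInertial F y)
    (e : L ≃ₗ⁅F⁆ L') : IsInertial F (e y) := by
  obtain ⟨hy0, x, c, hc, h⟩ := hy
  exact ⟨by simpa using hy0, e x, c, hc, by rw [← LieEquiv.map_lie, h, map_smul]⟩

variable [CharZero F] [FiniteDimensional F L]

theorem isNilpotent_ad {y : L} (hy : IsInertial F y) : IsNilpotent (ad F L y) := by
  obtain ⟨-, x, c, hc, h⟩ := hy
  refine isNilpotent_of_mul_sub_mul_eq_smul (x := ad F L x) hc ?_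
  rw [← map_smul, ← h, LieHom.map_lie, Ring.lie_def]

theorem lie_mem_span_s11 {y z : L} (hy : IsInertial F y) (hz : IsInertial F z) :
    ⁅y, z⁆ ∈ Submodule.span F {w : L | IsInertial F w} := by
  obtain ⟨N, hN⟩ := hy.isNilpotent_ad
  -- `⁅y, z⁆` is the linear coefficient of the curve `exp (t • ad y) z` of inertial elements.
  have hN2 : ad F L y ^ (N + 2) = 0 := pow_eq_zero_of_le (Nat.le_add_right N 2) hN
  have hcurve (t : F) : ∑ i ∈ Finset.range (N + 2),
      t ^ i • ((i.factorial : F)⁻¹ • (ad F L y ^ i) z) ∈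
        Submodule.span F {w : L | IsInertial F w} := by
    obtain ⟨e, he⟩ := exists_lieEquiv_apply_eq_sum_pow_smul_ad_pow hN2 t
    exact he z ▸ Submodule.subset_span (hz.map_lieEquiv e)
  simpa using mem_of_forall_sum_pow_smul_mem hcurve (i := 1) (by lia)

end IsInertial

variable (F L) in
/-- The linear span of the inertial elements, as a Lie subalgebra. -/
def inertialSubalgebra [CharZero F] [FiniteDimensional F L] : LieSubalgebra F L where
  __ := Submodule.span F {w : L | IsInertial F w}
  lie_mem' {u v} hu hv := by
    change ⁅u, v⁆ ∈ Submodule.span F {w : L | IsInertial F w}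
    induction hu, hv using Submodule.span_induction₂ with
    | mem_mem u v hu hv => exact IsInertial.lie_mem_span_s11 hu hv
    | zero_left v _ => simp
    | zero_right u _ => simp
    | add_left u₁ u₂ v _ _ _ h₁ h₂ => rw [add_lie]; exact add_mem h₁ h₂
    | add_right u v₁ v₂ _ _ _ h₁ h₂ => rw [lie_add]; exact add_mem h₁ h₂
    | smul_left t u v _ _ h => rw [smul_lie]; exact Submodule.smul_mem _ t h
    | smul_right t u v _ _ h => rw [lie_smul]; exact Submodule.smul_mem _ t h

theorem inertiallyGenerated_of_span_eq_top [FiniteDimensional F L]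
    (h : Submodule.span F {w : L | IsInertial F w} = ⊤) : InertiallyGenerated F L := by
  let b := Basis.ofSpan h.ge
  have : Finite _ := Module.Finite.finite_basis b
  let e := Finite.equivFin ((linearIndepOn_empty F id).extend
    (Set.empty_subset {w : L | IsInertial F w}))
  refine ⟨_, b.reindex e, fun i ↦ ?_⟩
  rw [Basis.reindex_apply]
  exact Basis.ofSpan_subset h.ge ⟨_, rfl⟩

theorem range_ad_le_inertialSubalgebra [CharZero F] [FiniteDimensional F L] {h : L}
    (hh : ⨆ c, (ad F L h).eigenspace c = ⊤) :
    LinearMap.range (ad F L h) ≤ (inertialSubalgebra F L).toSubmodule := by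
  refine range_le_of_iSup_eigenspace_eq_top hh fun c hc v hv ↦ ?_
  rcases eq_or_ne v 0 with rfl | hv0
  · exact zero_mem _
  · exact Submodule.subset_span ⟨hv0, h, c, hc, End.mem_eigenspace_iff.mp hv⟩

theorem inertialSubalgebra_eq_top [CharZero F] [FiniteDimensional F L] [IsSimple F L] {h : L}
    (hh0 : ad F L h ≠ 0) (hh : ⨆ c, (ad F L h).eigenspace c = ⊤) :
    inertialSubalgebra F L = ⊤ := by
  rw [eq_top_iff,
    ← lieSpan_range_ad_eq_top hh0 (ker_sup_range_eq_top_of_iSup_eigenspace_eq_top hh),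
    LieSubalgebra.lieSpan_le]
  exact range_ad_le_inertialSubalgebra hh

end Inertial

theorem stmt_11_general {F L : Type*} [Field F] [CharZero F] [LieRing L] [LieAlgebra F L]
    [FiniteDimensional F L] [IsSimple F L] (hL : ∃ y : L, IsInertial F y) :
    InertiallyGenerated F L := by
  obtain ⟨y, hy0, x, c, hc, hxy⟩ := hL
  obtain ⟨h, hh⟩ := exists_isRationalPart_ad (F := F) (AlgebraicClosure F) x
  have hhy : ad F L h y = c • y := hh.apply_eq_smul hxy
  have hh0 : ad F L h ≠ 0 := fun h0 ↦ smul_ne_zero hc hy0 (by rw [← hhy, h0]; rfl)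
  have htop := inertialSubalgebra_eq_top hh0 hh.iSup_eigenspace_eq_top
  exact inertiallyGenerated_of_span_eq_top (congrArg LieSubalgebra.toSubmodule htop)

/-- Let `F` have characteristic zero and let `L` be a simple Lie subalgebra of `sl n F`.
If some adjoint endomorphism `ad x : L → L` has two distinct eigenvalues in `F`,
then `L` is inertially generated. -/
theorem stmt_11 (F : Type*) [Field F] [CharZero F] (n : ℕ) (hn : 0 < n)
    (L : LieSubalgebra F (Matrix (Fin n) (Fin n) F))
    (hL : L ≤ LieAlgebra.SpecialLinear.sl (Fin n) F)
    (hsimple : LieAlgebra.IsSimple F L)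
    (hx : ∃ (x : L) (c₁ c₂ : F), c₁ ≠ c₂ ∧
      Module.End.HasEigenvalue (LieAlgebra.ad F L x) c₁ ∧
      Module.End.HasEigenvalue (LieAlgebra.ad F L x) c₂) :
    InertiallyGenerated F L := by
  obtain ⟨x, c₁, c₂, hne, h₁, h₂⟩ := hx
  rcases hne.ne_or_ne 0 with hc | hc
  · exact stmt_11_general (exists_isInertial_of_hasEigenvalue_ad hc h₁)
  · exact stmt_11_general (exists_isInertial_of_hasEigenvalue_ad hc h₂)
end

section
/- Let F be a field of characteristic 0 and D a finite-dimensional division algebra over F, regarded as a Lie algebra over F with bracket ⁅x, y⁆ = x*y − y*x. Then for every x ∈ D the adjoint endomorphism ad x : D → D is semisimple; in particular, D is a toral Lie algebra. -/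
attribute [local instance 100] LieRing.ofAssociativeRing

/-!
The endomorphism `ad x` is the difference of the commuting multiplications by `x` from the left and
from the right, both of which are killed by the minimal polynomial of `x`. In a reduced algebra this
polynomial is squarefree. Over a perfect field, differences of commuting elements with squarefree
minimal polynomials again have squarefree minimal polynomials; two such elements generate a
finite-dimensional algebra, which reduces this to the known case of commuting semisimple
endomorphisms of a finite-dimensional space.
-/

open Polynomial

open scoped IsMulCommutative in
theorem finite_adjoin_of_commute {R A : Type*} [CommRing R] [Ring A] [Algebra R A] {s : Set A}
    (hs : s.Finite) (hcomm : ∀ a ∈ s, ∀ b ∈ s, Commute a b) (hint : ∀ a ∈ s, IsIntegral R a) :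
    Module.Finite R (Algebra.adjoin R s) := by
  have : IsMulCommutative (Algebra.adjoin R s) := Algebra.isMulCommutative_adjoin R hcomm
  let t : Set (Algebra.adjoin R s) := (↑) ⁻¹' s
  have ht : t.Finite := hs.preimage Subtype.val_injective.injOn
  have ht_int : ∀ a ∈ t, IsIntegral R a := fun a ha ↦
    (isIntegral_algHom_iff (Algebra.adjoin R s).val Subtype.val_injective).mp (hint a ha)
  have ht_top : Algebra.adjoin R t = ⊤ := Algebra.adjoin_adjoin_coe_preimage
  have hfg : (Algebra.adjoin R t).toSubmodule.FG := fg_adjoin_of_finite ht ht_int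
  rw [ht_top, Algebra.top_toSubmodule] at hfg
  exact ⟨hfg⟩

theorem aeval_mulRight {R A : Type*} [CommSemiring R] [Semiring A] [Algebra R A] (a : A)
    (p : R[X]) : aeval (LinearMap.mulRight R a) p = LinearMap.mulRight R (aeval a p) := by
  ext y
  simp [aeval_eq_sum_range, LinearMap.sum_apply, Finset.mul_sum, LinearMap.pow_mulRight]

section Field

variable {F A : Type*} [Field F] [Ring A] [Algebra F A]

theorem isSemisimple_of_squarefree_minpoly {V : Type*} [AddCommGroup V] [Module F V]
    {f : Module.End F V} (hf : Squarefree (minpoly F f)) : f.IsSemisimple :=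
  Module.End.isSemisimple_of_squarefree_aeval_eq_zero hf (minpoly.aeval F f)

theorem minpoly_mulLeft (a : A) : minpoly F (LinearMap.mulLeft F a) = minpoly F a :=
  minpoly.algHom_eq (Algebra.lmul F A) Algebra.lmul_injective a

theorem minpoly_mulRight_dvd (a : A) : minpoly F (LinearMap.mulRight F a) ∣ minpoly F a :=
  minpoly.dvd F _ <| by rw [aeval_mulRight, minpoly.aeval, LinearMap.mulRight_zero_eq_zero]

theorem squarefree_minpoly [IsReduced A] {a : A} (ha : IsIntegral F a) :
    Squarefree (minpoly F a) :=
  (minpoly.isRadical F a).squarefree (minpoly.ne_zero ha)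

section PerfectField

variable [PerfectField F]

theorem squarefree_minpoly_sub_of_finiteDimensional [FiniteDimensional F A] {a b : A}
    (hab : Commute a b) (ha : Squarefree (minpoly F a)) (hb : Squarefree (minpoly F b)) :
    Squarefree (minpoly F (a - b)) := by
  rw [← minpoly_mulLeft] at ha hb
  have hcomm : Commute (LinearMap.mulLeft F a) (LinearMap.mulLeft F b) := hab.map (Algebra.lmul F A)
  have hsub : Module.End.IsSemisimple (LinearMap.mulLeft F a - LinearMap.mulLeft F b) :=
    (isSemisimple_of_squarefree_minpoly ha).sub_of_commute hcomm
      (isSemisimple_of_squarefree_minpoly hb)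
  have hmul : LinearMap.mulLeft F (a - b) = LinearMap.mulLeft F a - LinearMap.mulLeft F b :=
    map_sub (LinearMap.mul F A) a b
  rw [← minpoly_mulLeft, hmul]
  exact hsub.minpoly_squarefree

theorem squarefree_minpoly_sub_of_commute {a b : A} (hab : Commute a b)
    (ha : Squarefree (minpoly F a)) (hb : Squarefree (minpoly F b)) :
    Squarefree (minpoly F (a - b)) := by
  let B := Algebra.adjoin F {a, b}
  have : FiniteDimensional F B := by
    refine finite_adjoin_of_commute (Set.toFinite _) ?_ ?_
    · rintro _ (rfl | rfl) _ (rfl | rfl)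
      exacts [.refl _, hab, hab.symm, .refl _]
    · rintro _ (rfl | rfl)
      exacts [minpoly.ne_zero_iff.mp ha.ne_zero, minpoly.ne_zero_iff.mp hb.ne_zero]
  let a' : B := ⟨a, Algebra.subset_adjoin (by simp)⟩
  let b' : B := ⟨b, Algebra.subset_adjoin (by simp)⟩
  have hval (c : B) : minpoly F (c : A) = minpoly F c :=
    minpoly.algHom_eq B.val Subtype.val_injective c
  have hab' : Commute a' b' := Subtype.ext hab
  have hsub : Squarefree (minpoly F (a' - b')) :=
    squarefree_minpoly_sub_of_finiteDimensional hab' (hval a' ▸ ha) (hval b' ▸ hb)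
  rwa [← hval] at hsub

theorem squarefree_minpoly_ad {x : A} (hx : Squarefree (minpoly F x)) :
    Squarefree (minpoly F (LieAlgebra.ad F A x)) := by
  rw [LieAlgebra.ad_eq_lmul_left_sub_lmul_right]
  refine squarefree_minpoly_sub_of_commute (LinearMap.commute_mulLeft_right x x) ?_ ?_
  · rwa [minpoly_mulLeft]
  · exact hx.squarefree_of_dvd (minpoly_mulRight_dvd x)

end PerfectField

end Field

theorem isToral_iff_isSemisimple_ad {F L : Type*} [Field F] [LieRing L] [LieAlgebra F L] :
    IsToral F L ↔ ∀ x : L, (LieAlgebra.ad F L x).IsSemisimple := by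
  simp only [IsToral, Module.End.isSemisimple_iff,
    Module.End.mem_invtSubmodule_iff_forall_mem_of_mem, LieAlgebra.ad_apply]

theorem stmt_12_general (F A : Type*) [Field F] [PerfectField F] [Ring A] [IsReduced A]
    [Algebra F A] [Algebra.IsIntegral F A] : IsToral F A := by
  refine isToral_iff_isSemisimple_ad.mpr fun x ↦ isSemisimple_of_squarefree_minpoly ?_
  exact squarefree_minpoly_ad (squarefree_minpoly (Algebra.IsIntegral.isIntegral x))

/-- A finite-dimensional division algebra `D` over a field `F` of characteristic zero,
regarded as a Lie algebra with the commutator bracket `⁅x, y⁆ = x * y - y * x`, has all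
adjoint endomorphisms semisimple; in particular, `D` is a toral Lie algebra. -/
theorem stmt_12 (F D : Type*) [Field F] [CharZero F] [DivisionRing D] [Algebra F D]
    [FiniteDimensional F D] :
    IsToral F D :=
  stmt_12_general F D
end

section
/- Let p be a prime, A a commutative Noetherian local ring with maximal ideal 𝔪 and residue field A/𝔪 ≅ 𝔽_p, n ≥ 2 and k ≥ 1. Let SL_n^k(A) denote the kernel of the reduction homomorphism SL_n(A) → SL_n(A/𝔪^k). Then SL_n^{k+1}(A) is a normal subgroup of SL_n^k(A), and the quotient group SL_n^k(A)/SL_n^{k+1}(A) is isomorphic to the additive group of n×n matrices with entries in the A-module 𝔪^k/𝔪^{k+1} whose trace (the sum of the diagonal entries) is zero. (Equivalently, it is isomorphic to (𝔪^k/𝔪^{k+1}) ⊗_ℤ M_n^0(ℤ), where M_n^0(ℤ) is the additive group of trace-zero n×n integer matrices.) -/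
set_option autoImplicit false

/-- For an ideal `I` of a commutative ring `A`, the congruence subgroup
`SL_n^I(A) = ker (SL_n(A) → SL_n(A/I))`. -/
def SLCong (n : ℕ) {A : Type*} [CommRing A] (I : Ideal A) :
    Subgroup (Matrix.SpecialLinearGroup (Fin n) A) :=
  (Matrix.SpecialLinearGroup.map (Ideal.Quotient.mk I)).ker

/-- The additive group of `n × n` matrices with entries in an ideal `V` of `B` and
trace zero. -/
def traceZeroMatricesIn (n : ℕ) {B : Type*} [CommRing B] (V : Ideal B) :
    AddSubgroup (Matrix (Fin n) (Fin n) B) where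
  carrier := {M | (∀ i j, M i j ∈ V) ∧ Matrix.trace M = 0}
  zero_mem' := ⟨fun i j => by simp, by simp⟩
  add_mem' := by
    rintro M N ⟨hM, hM0⟩ ⟨hN, hN0⟩
    refine ⟨fun i j => ?_, by simp [Matrix.trace_add, hM0, hN0]⟩
    simpa using V.add_mem (hM i j) (hN i j)
  neg_mem' := by
    rintro M ⟨hM, hM0⟩
    refine ⟨fun i j => ?_, by simp [Matrix.trace_neg, hM0]⟩
    simpa using V.neg_mem (hM i j)

instance slCong_normal (n : ℕ) {A : Type*} [CommRing A] (I : Ideal A) :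
    (SLCong n I).Normal :=
  MonoidHom.normal_ker _

/-!
The map `g ↦ g - 1 mod J` from `SL_n^I(A)` to matrices over `A ⧸ J` is a homomorphism whenever
`I * I ≤ J`, because `g * h - 1 = (g - 1) + (h - 1) + (g - 1) * (h - 1)`. Its kernel is
`SL_n^J(A)`, and its values have trace zero because `det (1 + M) ≡ 1 + tr M` modulo `I * I`.
It is onto the trace-zero matrices with entries in `I / J`: these are sums of reductions of
`u vᵀ` with `v ⬝ᵥ u = 0`, where `u` has entries in `I`, and `1 + u vᵀ` lies in `SL_n^I(A)` since
its determinant is exactly `1`. The diagonal differences `x (E_ii - E_jj)` are reached through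
`u vᵀ = x (e_i - e_j) (e_i + e_j)ᵀ`.
-/

open Matrix

section Determinant

variable {ι A : Type*} [CommRing A] {I : Ideal A}

theorem prod_one_add_sub_one_add_sum_mem_mul_self {f : ι → A} (hf : ∀ i, f i ∈ I)
    (s : Finset ι) : ∏ i ∈ s, (1 + f i) - (1 + ∑ i ∈ s, f i) ∈ I * I := by
  classical
  induction s using Finset.induction_on with
  | empty => simp
  | insert a s ha ih =>
    have hmul : f a * ∑ i ∈ s, f i ∈ I * I :=
      Ideal.mul_mem_mul (hf a) (I.sum_mem fun i _ => hf i)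
    rw [Finset.prod_insert ha, Finset.sum_insert ha]
    convert add_mem (Ideal.mul_mem_left _ (1 + f a) ih) hmul using 1
    ring

variable [Fintype ι] [DecidableEq ι]

theorem prod_one_add_apply_mem_mul_self {M : Matrix ι ι A} (hM : M ∈ I.matrix ι)
    {σ : Equiv.Perm ι} (hσ : σ ≠ 1) : ∏ i, (1 + M) (σ i) i ∈ I * I := by
  obtain ⟨i, hi⟩ : ∃ i, σ i ≠ i := by
    by_contra! h
    exact hσ (Equiv.ext h)
  have moved_mem {j : ι} (hj : σ j ≠ j) : (1 + M) (σ j) j ∈ I := by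
    simpa [hj] using hM (σ j) j
  rw [← Finset.mul_prod_erase _ _ (Finset.mem_univ i),
    ← Finset.mul_prod_erase _ _ (Finset.mem_erase.2 ⟨hi, Finset.mem_univ (σ i)⟩), ← mul_assoc]
  exact Ideal.mul_mem_right _ _ <|
    Ideal.mul_mem_mul (moved_mem hi) (moved_mem (σ.injective.ne hi))

theorem det_one_add_sub_one_add_trace_mem_mul_self {M : Matrix ι ι A} (hM : M ∈ I.matrix ι) :
    (1 + M).det - (1 + M.trace) ∈ I * I := by
  have diagonal_term : ∏ i, (1 + M) i i - (1 + M.trace) ∈ I * I := by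
    simpa [Matrix.trace] using
      prod_one_add_sub_one_add_sum_mem_mul_self (fun i => hM i i) Finset.univ
  have other_terms : ∑ σ ∈ Finset.univ.erase (1 : Equiv.Perm ι),
      Equiv.Perm.sign σ • ∏ i, (1 + M) (σ i) i ∈ I * I :=
    sum_mem fun σ hσ => zsmul_mem
      (prod_one_add_apply_mem_mul_self hM (Finset.ne_of_mem_erase hσ)) (Equiv.Perm.sign σ : ℤ)
  rw [det_apply, ← Finset.add_sum_erase _ _ (Finset.mem_univ 1)]
  simpa [add_sub_right_comm] using add_mem diagonal_term other_terms

end Determinant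

section MatricesOverIdeals

variable {ι A : Type*} [CommRing A] [Fintype ι] [DecidableEq ι] {I J : Ideal A}

theorem mul_mem_matrix_mul {M N : Matrix ι ι A} (hM : M ∈ I.matrix ι) (hN : N ∈ J.matrix ι) :
    M * N ∈ (I * J).matrix ι := fun i j =>
  sum_mem fun l _ => Ideal.mul_mem_mul (hM i l) (hN l j)

theorem mapMatrix_mk_eq_zero_iff {M : Matrix ι ι A} :
    (Ideal.Quotient.mk I).mapMatrix M = 0 ↔ M ∈ I.matrix ι := by
  simp [← Matrix.ext_iff, Ideal.Quotient.eq_zero_iff_mem]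

theorem mapMatrix_mk_mul_sub_one (hIJ : I * I ≤ J) {M N : Matrix ι ι A}
    (hM : M - 1 ∈ I.matrix ι) (hN : N - 1 ∈ I.matrix ι) :
    (Ideal.Quotient.mk J).mapMatrix (M * N - 1) =
      (Ideal.Quotient.mk J).mapMatrix (M - 1) + (Ideal.Quotient.mk J).mapMatrix (N - 1) := by
  have product_vanishes : (Ideal.Quotient.mk J).mapMatrix ((M - 1) * (N - 1)) = 0 :=
    mapMatrix_mk_eq_zero_iff.2 <| Ideal.matrix_monotone _ hIJ <| mul_mem_matrix_mul hM hN
  rw [← map_add, ← sub_eq_zero, ← map_sub, ← product_vanishes]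
  congr 1
  noncomm_ring

end MatricesOverIdeals

section RankOne

variable {ι A : Type*} [DecidableEq ι]

theorem vecMulVec_single_single [MulZeroClass A] (i j : ι) (a b : A) :
    vecMulVec (Pi.single i a) (Pi.single j b) = single i j (a * b) := by
  ext k l
  simp [vecMulVec_apply, single_apply, Pi.single_apply, ← ite_and, and_comm, eq_comm]

theorem single_sub_single_eq_vecMulVec [Ring A] (i j : ι) (x : A) :
    single i i x - single j j x =
      vecMulVec (Pi.single i x - Pi.single j x) (Pi.single i 1 + Pi.single j 1)
        - single i j x + single j i x := by
  simp only [sub_vecMulVec, vecMulVec_add, vecMulVec_single_single, mul_one]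
  abel

variable [Fintype ι] [CommRing A]

/-- The transvection `1 + u vᵀ`, of determinant `1 + v ⬝ᵥ u = 1`. -/
def vecTransvection (u v : ι → A) (huv : v ⬝ᵥ u = 0) : SpecialLinearGroup ι A :=
  ⟨1 + vecMulVec u v, by
    rw [vecMulVec_eq Unit, det_one_add_replicateCol_mul_replicateRow, huv, add_zero]⟩

theorem vecTransvection_sub_one {u v : ι → A} (huv : v ⬝ᵥ u = 0) :
    (vecTransvection u v huv : Matrix ι ι A) - 1 = vecMulVec u v :=
  add_sub_cancel_left _ _

end RankOne

section TraceZero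

variable {n : ℕ} {A B : Type*} [CommRing A] [CommRing B]

theorem traceZeroMatricesIn_le_of_single_mem {V : Ideal A}
    {S : AddSubgroup (Matrix (Fin n) (Fin n) A)}
    (single_mem : ∀ i j, i ≠ j → ∀ x ∈ V, single i j x ∈ S)
    (single_sub_single_mem : ∀ i j, ∀ x ∈ V, single i i x - single j j x ∈ S) :
    traceZeroMatricesIn n V ≤ S := by
  rintro M ⟨hV, htrace : M.trace = 0⟩
  rcases isEmpty_or_nonempty (Fin n) with _ | ⟨⟨l⟩⟩
  · exact Subsingleton.elim 0 M ▸ S.zero_mem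
  have decomposition :
      M = ∑ i, ∑ j, (single i j (M i j) - single l l (single i j (M i j)).trace) := by
    calc M = M - singleAddMonoidHom l l M.trace := by simp [htrace]
      _ = _ := by
        conv_lhs => rw [matrix_eq_sum_single M]
        simp only [trace_sum, map_sum, Finset.sum_sub_distrib, singleAddMonoidHom_apply]
  rw [decomposition]
  refine sum_mem fun i _ => sum_mem fun j _ => ?_
  rcases eq_or_ne i j with rfl | hij
  · simpa using single_sub_single_mem i l _ (hV i i)
  · simpa [trace_single_eq_of_ne _ _ _ hij] using single_mem i j hij _ (hV i j)

theorem traceZeroMatricesIn_map_le_of_vecMulVec_mem {f : A →+* B} (hf : Function.Surjective f)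
    {I : Ideal A} {S : AddSubgroup (Matrix (Fin n) (Fin n) B)}
    (vecMulVec_mem : ∀ u v : Fin n → A, u ∈ Ideal.pi (fun _ => I) → v ⬝ᵥ u = 0 →
      f.mapMatrix (vecMulVec u v) ∈ S) :
    traceZeroMatricesIn n (I.map f) ≤ S := by
  have single_mem {i j : Fin n} (hij : i ≠ j) {a : A} (ha : a ∈ I) :
      f.mapMatrix (single i j a) ∈ S := by
    rw [← mul_one a, ← vecMulVec_single_single]
    exact vecMulVec_mem _ _ (Ideal.single_mem_pi ha) (by simp [hij])
  have single_sub_single_mem (i j : Fin n) {a : A} (ha : a ∈ I) :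
      f.mapMatrix (single i i a - single j j a) ∈ S := by
    rcases eq_or_ne i j with rfl | hij
    · simp
    rw [single_sub_single_eq_vecMulVec, map_add, map_sub]
    refine add_mem (sub_mem (vecMulVec_mem _ _ ?_ ?_) (single_mem hij ha))
      (single_mem hij.symm ha)
    · exact sub_mem (Ideal.single_mem_pi ha) (Ideal.single_mem_pi ha)
    · simp [hij, hij.symm]
  refine traceZeroMatricesIn_le_of_single_mem (fun i j hij x hx => ?_) fun i j x hx => ?_ <;>
    obtain ⟨a, ha, rfl⟩ := (Ideal.mem_map_iff_of_surjective _ hf).1 hx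
  · simpa using single_mem hij ha
  · simpa [Matrix.map_sub] using single_sub_single_mem i j ha

end TraceZero

namespace SLCong

variable {n : ℕ} {A : Type*} [CommRing A] {I J : Ideal A}

theorem mem_iff {g : SpecialLinearGroup (Fin n) A} :
    g ∈ SLCong n I ↔ (g : Matrix (Fin n) (Fin n) A) - 1 ∈ I.matrix (Fin n) := by
  rw [← mapMatrix_mk_eq_zero_iff, map_sub, map_one, sub_eq_zero]
  exact Subtype.ext_iff

theorem mono (hJI : J ≤ I) : SLCong n J ≤ SLCong n I := fun _ hg =>
  mem_iff.2 (Ideal.matrix_monotone _ hJI (mem_iff.1 hg))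

theorem trace_sub_one_mem_mul_self {g : SpecialLinearGroup (Fin n) A} (hg : g ∈ SLCong n I) :
    ((g : Matrix (Fin n) (Fin n) A) - 1).trace ∈ I * I := by
  have hdet := det_one_add_sub_one_add_trace_mem_mul_self (mem_iff.1 hg)
  rwa [add_sub_cancel, g.det_coe, sub_add_cancel_left, neg_mem_iff] at hdet

theorem mapMatrix_sub_one_mem_traceZeroMatricesIn (hIJ : I * I ≤ J)
    {g : SpecialLinearGroup (Fin n) A} (hg : g ∈ SLCong n I) :
    (Ideal.Quotient.mk J).mapMatrix ((g : Matrix (Fin n) (Fin n) A) - 1) ∈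
      traceZeroMatricesIn n (I.map (Ideal.Quotient.mk J)) := by
  refine ⟨fun i j => Ideal.mem_map_of_mem _ (mem_iff.1 hg i j), ?_⟩
  rw [RingHom.mapMatrix_apply, ← AddMonoidHom.map_trace]
  exact Ideal.Quotient.eq_zero_iff_mem.2 (hIJ (trace_sub_one_mem_mul_self hg))

/-- The homomorphism `SL_n^I(A) → M_n^0(I / J)`, `g ↦ g - 1 mod J`, where `I / J` is realized as
the image of `I` in `A ⧸ J`. -/
def subOneMod (n : ℕ) (hIJ : I * I ≤ J) :
    SLCong n I →* Multiplicative (traceZeroMatricesIn n (I.map (Ideal.Quotient.mk J))) :=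
  MonoidHom.mk'
    (fun g => .ofAdd ⟨_, mapMatrix_sub_one_mem_traceZeroMatricesIn hIJ g.2⟩)
    fun g h => Subtype.ext (mapMatrix_mk_mul_sub_one hIJ (mem_iff.1 g.2) (mem_iff.1 h.2))

theorem coe_subOneMod (hIJ : I * I ≤ J) (g : SLCong n I) :
    ((subOneMod n hIJ g).toAdd : Matrix (Fin n) (Fin n) (A ⧸ J)) =
      (Ideal.Quotient.mk J).mapMatrix ((g : Matrix (Fin n) (Fin n) A) - 1) := rfl

theorem ker_subOneMod (hIJ : I * I ≤ J) :
    (subOneMod n hIJ).ker = (SLCong n J).subgroupOf (SLCong n I) := by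
  ext g
  rw [MonoidHom.mem_ker, Subgroup.mem_subgroupOf, mem_iff, ← mapMatrix_mk_eq_zero_iff,
    ← coe_subOneMod hIJ, ZeroMemClass.coe_eq_zero, toAdd_eq_zero]

theorem exists_subOneMod_eq_vecMulVec (hIJ : I * I ≤ J) {u v : Fin n → A}
    (hu : u ∈ Ideal.pi fun _ => I) (huv : v ⬝ᵥ u = 0) :
    ∃ g, ((subOneMod n hIJ g).toAdd : Matrix (Fin n) (Fin n) (A ⧸ J)) =
      (Ideal.Quotient.mk J).mapMatrix (vecMulVec u v) := by
  have hmem : vecTransvection u v huv ∈ SLCong n I := by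
    rw [mem_iff, vecTransvection_sub_one]
    exact fun i j => I.mul_mem_right _ (hu i)
  exact ⟨⟨_, hmem⟩, by rw [coe_subOneMod, vecTransvection_sub_one]⟩

theorem subOneMod_surjective (hIJ : I * I ≤ J) : Function.Surjective (subOneMod n hIJ) := by
  let S : AddSubgroup (Matrix (Fin n) (Fin n) (A ⧸ J)) :=
    ((traceZeroMatricesIn n _).subtype.comp (subOneMod n hIJ).toAdditiveLeft).range
  have traceZero_le : traceZeroMatricesIn n (I.map (Ideal.Quotient.mk J)) ≤ S :=
    traceZeroMatricesIn_map_le_of_vecMulVec_mem Ideal.Quotient.mk_surjective fun _ _ =>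
      exists_subOneMod_eq_vecMulVec hIJ
  intro M
  obtain ⟨g, hg⟩ := traceZero_le M.toAdd.2
  exact ⟨g.toMul, Subtype.ext hg⟩

/-- The isomorphism `SL_n^I(A) / SL_n^J(A) ≃ M_n^0(I / J)` induced by `g ↦ g - 1 mod J`. -/
noncomputable def quotientMulEquiv (n : ℕ) (hIJ : I * I ≤ J) :
    SLCong n I ⧸ (SLCong n J).subgroupOf (SLCong n I) ≃*
      Multiplicative (traceZeroMatricesIn n (I.map (Ideal.Quotient.mk J))) :=
  QuotientGroup.liftEquiv _ (subOneMod_surjective hIJ) (ker_subOneMod hIJ).symm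

end SLCong

theorem stmt_14_general (n : ℕ) {A : Type*} [CommRing A] {I J : Ideal A} (hJI : J ≤ I)
    (hIJ : I * I ≤ J) :
    SLCong n J ≤ SLCong n I ∧ ((SLCong n J).subgroupOf (SLCong n I)).Normal ∧
      Nonempty (SLCong n I ⧸ (SLCong n J).subgroupOf (SLCong n I) ≃*
        Multiplicative (traceZeroMatricesIn n (I.map (Ideal.Quotient.mk J)))) :=
  ⟨SLCong.mono hJI, inferInstance, ⟨SLCong.quotientMulEquiv n hIJ⟩⟩

/-- Let `A` be a commutative Noetherian local ring with maximal ideal `𝔪` and residue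
field `𝔽_p`, and let `n ≥ 2`, `k ≥ 1`.  Then `SL_n^{k+1}(A)` is a normal subgroup of
`SL_n^k(A)` and the quotient is isomorphic to the additive group of `n × n` matrices with
entries in `𝔪^k / 𝔪^{k+1}` (realized as the image of `𝔪^k` in `A ⧸ 𝔪^{k+1}`) of trace
zero. -/
theorem stmt_14 (p n k : ℕ) (hp : p.Prime) (hn : 2 ≤ n) (hk : 1 ≤ k)
    (A : Type*) [CommRing A] [IsNoetherianRing A] [IsLocalRing A]
    (hres : Nonempty (IsLocalRing.ResidueField A ≃+* ZMod p)) :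
    SLCong n ((IsLocalRing.maximalIdeal A) ^ (k + 1)) ≤
        SLCong n ((IsLocalRing.maximalIdeal A) ^ k) ∧
    ((SLCong n ((IsLocalRing.maximalIdeal A) ^ (k + 1))).subgroupOf
        (SLCong n ((IsLocalRing.maximalIdeal A) ^ k))).Normal ∧
    Nonempty
      ((SLCong n ((IsLocalRing.maximalIdeal A) ^ k) ⧸
          (SLCong n ((IsLocalRing.maximalIdeal A) ^ (k + 1))).subgroupOf
            (SLCong n ((IsLocalRing.maximalIdeal A) ^ k))) ≃*
        Multiplicative (traceZeroMatricesIn n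
          (Ideal.map (Ideal.Quotient.mk ((IsLocalRing.maximalIdeal A) ^ (k + 1)))
            ((IsLocalRing.maximalIdeal A) ^ k)))) :=
  stmt_14_general n (Ideal.pow_le_pow_right k.le_succ) <| by
    rw [← pow_add]
    exact Ideal.pow_le_pow_right (by lia)
end
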